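/- arXiv:1803.11059 — 3 statements merged into one kernel-verified Lean document; each statement's English description precedes it below -/
import Mathlib

section
/- For an m-dimensional standard Gaussian vector N and α ∈ (0,1), sup over convex sets A ⊆ R^m of E[d(N, ∂A)^{-α}] is at most 1 + 2√(2/π)·m^{3/2}·α/(1-α). -/
open MeasureTheory Real Metric

/-- The standard Gaussian measure on `ℝ^m`, defined via its density with respect to
Lebesgue measure. -/
noncomputable def stdGaussian (m : ℕ) : Measure (EuclideanSpace ℝ (Fin m)) :=
  volume.withDensity
    (fun z => ENNReal.ofReal ((2 * π) ^ (-(m : ℝ) / 2) * Real.exp (-‖z‖ ^ 2 / 2)))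

lemma stdGaussian_univ_le (m : ℕ) : stdGaussian m Set.univ = 1 := by
  have h := GaussianFourier.integral_rexp_neg_mul_sq_norm (V := EuclideanSpace ℝ (Fin m))
    (b := 1 / 2) (by norm_num)
  have hIntg : Integrable (fun v : EuclideanSpace ℝ (Fin m) => rexp (-(1/2) * ‖v‖ ^ 2)) := by
    by_contra hc
    rw [integral_undef hc] at h
    have : 0 < (π / (1/2)) ^ (Module.finrank ℝ (EuclideanSpace ℝ (Fin m)) / 2 : ℝ) := by positivity
    linarith
  rw [stdGaussian, withDensity_apply _ MeasurableSet.univ, Measure.restrict_univ]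
  have e : ∀ z : EuclideanSpace ℝ (Fin m), (2 * π) ^ (-(m : ℝ) / 2) * Real.exp (-‖z‖ ^ 2 / 2)
      = (2 * π) ^ (-(m : ℝ) / 2) * rexp (-(1/2) * ‖z‖ ^ 2) := by
    intro z; congr 2; ring
  simp_rw [e]
  rw [← ofReal_integral_eq_lintegral_ofReal (hIntg.const_mul _) (ae_of_all _ fun z => by positivity),
    integral_const_mul, h]
  have : π / (1/2) = 2 * π := by ring
  rw [this, finrank_euclideanSpace_fin, ← Real.rpow_add (by positivity)]
  have : -(m:ℝ)/2 + m/2 = 0 := by ring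
  rw [this]; simp

lemma slice_bound {n : ℕ} (i : Fin (n+1)) (S : Set (EuclideanSpace ℝ (Fin (n+1))))
    (hS : MeasurableSet S) (c : ENNReal)
    (h : ∀ x : EuclideanSpace ℝ (Fin (n+1)),
      volume {t : ℝ | x + t • EuclideanSpace.single i (1:ℝ) ∈ S} ≤ c) :
    stdGaussian (n+1) S ≤ ENNReal.ofReal ((2 * π) ^ (-(1 : ℝ) / 2)) * c := by
  have hone : ∀ m : ℕ, ∫⁻ z : Fin m → ℝ,
      ENNReal.ofReal ((2 * π) ^ (-(m : ℝ) / 2) * Real.exp (-(∑ j, z j ^ 2) / 2)) = 1 := by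
    intro m
    rw [← stdGaussian_univ_le m, stdGaussian, withDensity_apply _ MeasurableSet.univ,
      Measure.restrict_univ, ← (PiLp.volume_preserving_toLp (Fin m)).lintegral_comp (by fun_prop)]
    simp [EuclideanSpace.norm_sq_eq]
  have hfm : Measurable fun z : EuclideanSpace ℝ (Fin (n+1)) =>
      ENNReal.ofReal ((2 * π) ^ (-((n+1 : ℕ) : ℝ) / 2) * Real.exp (-‖z‖ ^ 2 / 2)) := by fun_prop
  have hSm : MeasurableSet ((WithLp.toLp 2 : (Fin (n+1) → ℝ) → _) ⁻¹' S) :=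
    (PiLp.volume_preserving_toLp (Fin (n+1))).measurable hS
  have key : ∀ (t : ℝ) (y : Fin n → ℝ),
      S.indicator (fun z => ENNReal.ofReal ((2 * π) ^ (-((n+1 : ℕ) : ℝ) / 2) *
        Real.exp (-‖z‖ ^ 2 / 2))) (WithLp.toLp 2 (i.insertNth t y : Fin (n+1) → ℝ)) ≤
      (ENNReal.ofReal ((2 * π) ^ (-(1 : ℝ) / 2)) *
        {t : ℝ | WithLp.toLp 2 (i.insertNth t y : Fin (n+1) → ℝ) ∈ S}.indicator 1 t) *
       ENNReal.ofReal ((2 * π) ^ (-(n : ℝ) / 2) * Real.exp (-(∑ j, y j ^ 2) / 2)) := by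
    intro t y
    by_cases hm : WithLp.toLp 2 (i.insertNth t y : Fin (n+1) → ℝ) ∈ S
    · rw [Set.indicator_of_mem hm, Set.indicator_of_mem (by exact hm), Pi.one_apply, mul_one,
        ← ENNReal.ofReal_mul (by positivity)]
      apply ENNReal.ofReal_le_ofReal
      rw [EuclideanSpace.norm_sq_eq, Fin.sum_univ_succAbove _ i]
      simp only [Fin.insertNth_apply_same, Fin.insertNth_apply_succAbove, Real.norm_eq_abs, sq_abs]
      have e1 : (2 * π) ^ (-((n+1 : ℕ) : ℝ) / 2) =
          (2 * π) ^ (-(1 : ℝ) / 2) * (2 * π) ^ (-(n : ℝ) / 2) := by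
        rw [← Real.rpow_add (by positivity)]; congr 1; push_cast; ring
      rw [e1, mul_assoc]
      gcongr
      nlinarith [sq_nonneg t]
    · rw [Set.indicator_of_notMem hm]; exact zero_le
  rw [stdGaussian, withDensity_apply _ hS, ← lintegral_indicator hS,
    ← (PiLp.volume_preserving_toLp (Fin (n+1))).lintegral_comp (hfm.indicator hS),
    ← ((volume_preserving_piFinSuccAbove (fun _ : Fin (n + 1) => ℝ) i).symm).lintegral_comp
      (show Measurable (fun a : Fin (n+1) → ℝ => S.indicator (fun z => ENNReal.ofReal
        ((2 * π) ^ (-((n+1 : ℕ) : ℝ) / 2) * Real.exp (-‖z‖ ^ 2 / 2))) (WithLp.toLp 2 a)) from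
      (hfm.indicator hS).comp (PiLp.volume_preserving_toLp (Fin (n+1))).measurable)]
  have hm2 : Measurable fun p : ℝ × (Fin n → ℝ) =>
      (WithLp.toLp 2 ((MeasurableEquiv.piFinSuccAbove (fun _ : Fin (n + 1) => ℝ) i).symm p)) :=
    (PiLp.volume_preserving_toLp (Fin (n+1))).measurable.comp (MeasurableEquiv.measurable _)
  rw [Measure.volume_eq_prod, lintegral_prod_symm _
    (by exact ((hfm.indicator hS).comp hm2).aemeasurable)]
  have hin : ∀ y : Fin n → ℝ, ∫⁻ t : ℝ, S.indicator (fun z => ENNReal.ofReal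
      ((2 * π) ^ (-((n+1 : ℕ) : ℝ) / 2) *
        Real.exp (-‖z‖ ^ 2 / 2))) (WithLp.toLp 2 (i.insertNth t y : Fin (n+1) → ℝ)) ≤
      (ENNReal.ofReal ((2 * π) ^ (-(1 : ℝ) / 2)) * c) *
       ENNReal.ofReal ((2 * π) ^ (-(n : ℝ) / 2) * Real.exp (-(∑ j, y j ^ 2) / 2)) := by
    intro y
    have hT : MeasurableSet {t : ℝ | WithLp.toLp 2 (i.insertNth t y : Fin (n+1) → ℝ) ∈ S} :=
      (hm2.comp (measurable_id.prodMk (measurable_const (a := y)))) hS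
    refine (lintegral_mono fun t => key t y).trans ?_
    rw [lintegral_mul_const _ ((measurable_one.indicator hT).const_mul _),
      lintegral_const_mul _ (measurable_one.indicator hT), lintegral_indicator_one hT]
    gcongr
    have heq : ∀ t : ℝ, WithLp.toLp 2 (i.insertNth t y : Fin (n+1) → ℝ) =
        WithLp.toLp 2 (i.insertNth 0 y : Fin (n+1) → ℝ) + t • EuclideanSpace.single i (1:ℝ) := by
      intro t
      ext j
      refine Fin.succAboveCases i ?_ (fun k => ?_) j <;> simp
    have h1 := h (WithLp.toLp 2 (i.insertNth 0 y : Fin (n+1) → ℝ))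
    simp_rw [← heq] at h1
    exact h1
  refine (lintegral_mono fun y => hin y).trans ?_
  rw [lintegral_const_mul _ (by fun_prop), hone n, mul_one]

lemma exit_bound {m : ℕ} (i : Fin m) (B : Set (EuclideanSpace ℝ (Fin m)))
    (hB : Convex ℝ B) (hBo : IsOpen B) (s : ℝ) :
    stdGaussian m {x | x ∈ B ∧ x + s • EuclideanSpace.single i (1:ℝ) ∉ B} ≤
      ENNReal.ofReal ((2 * π) ^ (-(1 : ℝ) / 2) * |s|) := by
  obtain _ | n := m
  · exact i.elim0
  rw [ENNReal.ofReal_mul (by positivity)]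
  apply slice_bound i
  · have : Measurable fun x : EuclideanSpace ℝ (Fin (n+1)) =>
      x + s • EuclideanSpace.single i (1:ℝ) := by fun_prop
    exact hBo.measurableSet.inter (this hBo.measurableSet.compl)
  intro x
  refine (Real.volume_le_diam _).trans (Metric.ediam_le ?_)
  have hs : ∀ a b : ℝ, x + a • EuclideanSpace.single i (1:ℝ) ∈ B →
      x + b • EuclideanSpace.single i (1:ℝ) ∈ B → ∀ c, c ∈ Set.uIcc a b →
      x + c • EuclideanSpace.single i (1:ℝ) ∈ B := by
    intro a b ha hb c hc
    have hconv : Convex ℝ {t : ℝ | x + t • EuclideanSpace.single i (1:ℝ) ∈ B} := by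
      intro p hp q hq u v hu hv huv
      have := hB hp hq hu hv huv
      simp only [Set.mem_ofPred_eq]
      convert this using 1
      have : x = (u + v) • x := by rw [huv, one_smul]
      nth_rw 1 [this]
      simp only [smul_eq_mul]
      module
    exact hconv.ordConnected.uIcc_subset ha hb hc
  rintro a ⟨ha, ha'⟩ b ⟨hb, hb'⟩
  rw [edist_dist, Real.dist_eq]
  apply ENNReal.ofReal_le_ofReal
  rw [add_assoc, ← add_smul] at ha' hb'
  by_contra! hc
  have h1 := mt (hs a b ha hb (a + s)) ha'
  have h2 := mt (hs a b ha hb (b + s)) hb'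
  rw [Set.mem_uIcc] at h1 h2
  push Not at h1 h2
  rcases abs_cases s with ⟨h3, h4⟩ | ⟨h3, h4⟩ <;> rcases abs_cases (a - b) with ⟨h5, h6⟩ | ⟨h5, h6⟩
  · have := h2.2 (by linarith); linarith
  · have := h1.1 (by linarith); linarith
  · by_cases hh : b ≤ a + s
    · have := h1.2 hh; linarith
    · linarith
  · by_cases hh : a ≤ b + s
    · have := h2.1 hh; linarith
    · linarith

lemma exists_exit {m : ℕ} (B : Set (EuclideanSpace ℝ (Fin m))) (v x : EuclideanSpace ℝ (Fin m))
    (hv : v ≠ 0) (r : ℝ) (hr : 0 ≤ r)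
    (h : ∀ z ∈ B, inner ℝ v z < inner ℝ v x + r * ‖v‖) :
    ∃ i : Fin m, x + (r * √m) • EuclideanSpace.single i (1:ℝ) ∉ B ∨
      x + (-(r * √m)) • EuclideanSpace.single i (1:ℝ) ∉ B := by
  have hi : ∃ i : Fin m, ‖v‖ ≤ √m * |v i| := by
    by_contra! hc
    have hne : Nonempty (Fin m) := by
      by_contra he
      rw [not_nonempty_iff] at he
      exact hv (Subsingleton.elim _ _)
    have hm : 0 < (m:ℝ) := by exact_mod_cast Fin.pos_iff_nonempty.2 hne
    have : ∑ i, (m:ℝ) * v i ^ 2 < ∑ i : Fin m, ‖v‖ ^ 2 := by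
      apply Finset.sum_lt_sum_of_nonempty Finset.univ_nonempty
      intro i _
      have := pow_lt_pow_left₀ (hc i) (by positivity) two_ne_zero
      rwa [mul_pow, sq_abs, Real.sq_sqrt hm.le] at this
    rw [← Finset.mul_sum] at this
    have e := EuclideanSpace.norm_sq_eq v
    simp only [Real.norm_eq_abs, sq_abs] at e
    rw [← e] at this
    simp at this
  obtain ⟨i, hi⟩ := hi
  refine ⟨i, ?_⟩
  by_contra! hc
  have h1 := h _ hc.1
  have h2 := h _ hc.2
  simp only [inner_add_right, inner_smul_right, EuclideanSpace.inner_single_right] at h1 h2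
  simp at h1 h2
  have := mul_le_mul_of_nonneg_left hi hr
  rcases abs_cases (v i) with ⟨h3, h4⟩ | ⟨h3, h4⟩ <;> rw [h3] at this <;> nlinarith

lemma shell_bound {m : ℕ} (B T : Set (EuclideanSpace ℝ (Fin m)))
    (hB : Convex ℝ B) (hBo : IsOpen B) (r : ℝ) (hr : 0 ≤ r) (hTB : T ⊆ B)
    (h : ∀ x ∈ T, ∃ v : EuclideanSpace ℝ (Fin m), v ≠ 0 ∧
      ∀ z ∈ B, inner ℝ v z < inner ℝ v x + r * ‖v‖) :
    stdGaussian m T ≤ ENNReal.ofReal (√(2 / π) * (m : ℝ) ^ ((3 : ℝ) / 2) * r) := by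
  have hsub : T ⊆ ⋃ i : Fin m,
      ({x | x ∈ B ∧ x + (r * √m) • EuclideanSpace.single i (1:ℝ) ∉ B} ∪
       {x | x ∈ B ∧ x + (-(r * √m)) • EuclideanSpace.single i (1:ℝ) ∉ B}) := by
    intro x hx
    obtain ⟨v, hv, hz⟩ := h x hx
    obtain ⟨i, hi⟩ := exists_exit B v x hv r hr hz
    rw [Set.mem_iUnion]
    exact ⟨i, hi.imp (fun q => ⟨hTB hx, q⟩) (fun q => ⟨hTB hx, q⟩)⟩
  refine (measure_mono hsub).trans ((measure_iUnion_fintype_le _ _).trans ?_)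
  have hi : ∀ i : Fin m, stdGaussian m
      ({x | x ∈ B ∧ x + (r * √m) • EuclideanSpace.single i (1:ℝ) ∉ B} ∪
       {x | x ∈ B ∧ x + (-(r * √m)) • EuclideanSpace.single i (1:ℝ) ∉ B}) ≤
      ENNReal.ofReal (2 * ((2 * π) ^ (-(1 : ℝ) / 2) * (r * √m))) := by
    intro i
    have h1 := exit_bound i B hB hBo (r * √m)
    have h2 := exit_bound i B hB hBo (-(r * √m))
    rw [abs_neg] at h2
    rw [abs_of_nonneg (by positivity)] at h1 h2
    refine (measure_union_le _ _).trans ((add_le_add h1 h2).trans ?_)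
    rw [← ENNReal.ofReal_add (by positivity) (by positivity), ← two_mul]
  refine (Finset.sum_le_sum fun i _ => hi i).trans ?_
  rw [Finset.sum_const, Finset.card_univ, Fintype.card_fin, nsmul_eq_mul,
    ← ENNReal.ofReal_natCast, ← ENNReal.ofReal_mul (by positivity)]
  apply ENNReal.ofReal_le_ofReal
  apply le_of_eq
  have e1 : (m : ℝ) ^ ((3 : ℝ) / 2) = m * √m := by
    rw [Real.sqrt_eq_rpow]
    rcases Nat.eq_zero_or_pos m with rfl | hm
    · rw [Nat.cast_zero, Real.zero_rpow (by norm_num)]; simp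
    · have : (0:ℝ) < m := by exact_mod_cast hm
      nth_rw 2 [← Real.rpow_one (m:ℝ)]
      rw [← Real.rpow_add this]; norm_num
  have e2 : √(2 / π) = 2 * (2 * π) ^ (-(1 : ℝ) / 2) := by
    have : (-(1:ℝ)/2) = -(1/2) := by ring
    rw [this, Real.rpow_neg (by positivity), ← Real.sqrt_eq_rpow]
    have : 2 / π = 4 / (2 * π) := by field_simp; norm_num
    rw [this, Real.sqrt_div (by norm_num), show (4:ℝ) = 2 ^ 2 by norm_num, Real.sqrt_sq (by norm_num)]
    rw [div_eq_mul_inv]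
  rw [e1, e2]; ring

lemma sazonov {m : ℕ} (A : Set (EuclideanSpace ℝ (Fin m))) (hA : Convex ℝ A) (r : ℝ) (hr : 0 < r) :
    stdGaussian m {x | 0 < infDist x (frontier A) ∧ infDist x (frontier A) < r} ≤
      ENNReal.ofReal (2 * √(2 / π) * (m : ℝ) ^ ((3 : ℝ) / 2) * r) := by
  rcases (frontier A).eq_empty_or_nonempty with he | hne
  · simp [he]
  set T1 := {x | x ∈ interior A ∧ infDist x (frontier A) < r}
  set T2 := {x | x ∈ thickening r A ∧ x ∉ closure A}
  have hsub : {x | 0 < infDist x (frontier A) ∧ infDist x (frontier A) < r} ⊆ T1 ∪ T2 := by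
    rintro x ⟨h0, h1⟩
    by_cases hx : x ∈ interior A
    · exact Or.inl ⟨hx, h1⟩
    · right
      refine ⟨?_, fun hc => ?_⟩
      · rw [← thickening_closure]
        obtain ⟨y, hy, hd⟩ := (infDist_lt_iff hne).1 h1
        exact mem_thickening_iff.2 ⟨y, frontier_subset_closure hy, hd⟩
      · have hxf : x ∈ frontier A := ⟨hc, hx⟩
        rw [infDist_zero_of_mem hxf] at h0
        exact lt_irrefl _ h0
  have b1 : stdGaussian m T1 ≤ ENNReal.ofReal (√(2 / π) * (m : ℝ) ^ ((3 : ℝ) / 2) * r) := by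
    refine shell_bound (interior A) T1 hA.interior isOpen_interior r hr.le (fun x hx => hx.1) ?_
    rintro x ⟨hx, hd⟩
    obtain ⟨y, hy, hd⟩ := (infDist_lt_iff hne).1 hd
    obtain ⟨f, hf⟩ := geometric_hahn_banach_open_point hA.interior isOpen_interior hy.2
    set v := (InnerProductSpace.toDual ℝ (EuclideanSpace ℝ (Fin m))).symm f with hvdef
    have hfv : ∀ z, f z = inner ℝ v z := fun z =>
      (InnerProductSpace.toDual_symm_apply).symm
    simp_rw [hfv] at hf
    refine ⟨v, ?_, fun z hz => ?_⟩
    · intro h0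
      have := hf x hx
      simp [h0] at this
    · refine (hf z hz).trans_le ?_
      have h1 : inner ℝ v (y - x) ≤ ‖v‖ * ‖y - x‖ := real_inner_le_norm _ _
      rw [inner_sub_right] at h1
      rw [dist_comm, dist_eq_norm] at hd
      nlinarith [norm_nonneg v]
  have b2 : stdGaussian m T2 ≤ ENNReal.ofReal (√(2 / π) * (m : ℝ) ^ ((3 : ℝ) / 2) * r) := by
    refine shell_bound (thickening r A) T2 (hA.thickening r) isOpen_thickening r hr.le
      (fun x hx => hx.1) ?_
    rintro x ⟨hx, hd⟩
    obtain ⟨f, u, hfx, hf⟩ := geometric_hahn_banach_point_closed hA.closure isClosed_closure hd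
    set v := (InnerProductSpace.toDual ℝ (EuclideanSpace ℝ (Fin m))).symm (-f) with hvdef
    have hfv : ∀ z, f z = - inner ℝ v z := fun z => by
      rw [hvdef, InnerProductSpace.toDual_symm_apply]; simp
    simp_rw [hfv] at hf hfx
    have hv : v ≠ 0 := by
      intro h0
      obtain ⟨a, ha, _⟩ := mem_thickening_iff.1 hx
      have := hf a (subset_closure ha)
      simp [h0] at this hfx
      linarith
    refine ⟨v, hv, fun z hz => ?_⟩
    obtain ⟨a, ha, hd⟩ := mem_thickening_iff.1 hz
    have h2 := hf a (subset_closure ha)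
    have h1 : inner ℝ v (z - a) ≤ ‖v‖ * ‖z - a‖ := real_inner_le_norm _ _
    rw [inner_sub_right] at h1
    rw [dist_eq_norm] at hd
    nlinarith [norm_nonneg v]
  refine (measure_mono hsub).trans ((measure_union_le _ _).trans ((add_le_add b1 b2).trans ?_))
  rw [← ENNReal.ofReal_add (by positivity) (by positivity)]
  apply ENNReal.ofReal_le_ofReal
  apply le_of_eq; ring

/-- For an `m`-dimensional standard Gaussian vector `N` and `α ∈ (0,1)`, for every convex
set `A ⊆ ℝ^m` one has `E[d(N, ∂A)^{-α}] ≤ 1 + 2√(2/π) m^{3/2} α/(1-α)`. -/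
theorem stmt7 (m : ℕ) (α : ℝ) (hα0 : 0 < α) (hα1 : α < 1)
    (A : Set (EuclideanSpace ℝ (Fin m))) (hA : Convex ℝ A) :
    (∫⁻ x, ENNReal.ofReal ((infDist x (frontier A)) ^ (-α)) ∂(stdGaussian m)) ≤
      ENNReal.ofReal (1 + 2 * Real.sqrt (2 / π) * (m : ℝ) ^ ((3 : ℝ) / 2) * α / (1 - α)) := by
  set C : ℝ := 2 * Real.sqrt (2 / π) * (m : ℝ) ^ ((3 : ℝ) / 2) with hC
  have hC0 : 0 ≤ C := by positivity
  have hmeas : Measurable fun x : EuclideanSpace ℝ (Fin m) =>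
      (infDist x (frontier A)) ^ (-α) := by
    have : Measurable fun x : EuclideanSpace ℝ (Fin m) => infDist x (frontier A) :=
      measurable_infDist
    fun_prop
  rw [lintegral_eq_lintegral_meas_lt _ (ae_of_all _ fun x => Real.rpow_nonneg infDist_nonneg _)
    hmeas.aemeasurable]
  have ha : -α⁻¹ < -1 := by
    have := (one_lt_inv₀ hα0).2 hα1
    linarith
  have hbig : ∀ t ∈ Set.Ioi (1:ℝ), stdGaussian m {x | t < (infDist x (frontier A)) ^ (-α)} ≤
      ENNReal.ofReal (C * t ^ (-α⁻¹)) := by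
    intro t ht
    have ht0 : (0:ℝ) < t := zero_lt_one.trans ht
    refine (measure_mono ?_).trans (sazonov A hA (t ^ (-α⁻¹)) (by positivity))
    intro x hx
    simp only [Set.mem_ofPred_eq] at hx ⊢
    have hpos : 0 < infDist x (frontier A) := by
      refine lt_of_le_of_ne infDist_nonneg fun h0 => ?_
      rw [← h0, Real.zero_rpow (by linarith)] at hx
      linarith
    refine ⟨hpos, ?_⟩
    have := Real.rpow_lt_rpow_of_neg ht0 hx (z := -α⁻¹) (by linarith)
    rwa [← Real.rpow_mul hpos.le, neg_mul_neg, mul_inv_cancel₀ hα0.ne', Real.rpow_one] at this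
  rw [← Set.Ioc_union_Ioi_eq_Ioi (zero_le_one' ℝ),
    lintegral_union measurableSet_Ioi (Set.Ioc_disjoint_Ioi le_rfl),
    mul_div_assoc, ENNReal.ofReal_add zero_le_one
      (mul_nonneg hC0 (div_nonneg hα0.le (by linarith)))]
  gcongr
  · refine (lintegral_mono (g := fun _ => 1) fun t => ?_).trans ?_
    · exact (measure_mono (Set.subset_univ _)).trans (stdGaussian_univ_le m).le
    · simp
  · refine (setLIntegral_mono (by fun_prop) hbig).trans ?_
    have hIntg := (integrableOn_Ioi_rpow_of_lt ha zero_lt_one).const_mul C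
    rw [← ofReal_integral_eq_lintegral_ofReal hIntg
      ((ae_restrict_iff' measurableSet_Ioi).2 (ae_of_all _ fun t ht => by
        have ht0 : (0:ℝ) < t := zero_lt_one.trans ht
        positivity)), integral_const_mul,
      integral_Ioi_rpow_of_lt ha zero_lt_one]
    apply ENNReal.ofReal_le_ofReal
    apply le_of_eq
    congr 1
    rw [Real.one_rpow]
    have h1 : 1 - α ≠ 0 := by linarith
    have h2 : -α⁻¹ + 1 ≠ 0 := by linarith
    rw [div_eq_div_iff h2 h1]
    field_simp
    ring
end

section
/- Define M_3 := ∫_{R^m} ( Σ_{i,j,k=1}^m (∂³φ_I/∂y_i∂y_j∂y_k (z))² )^{1/2} dz, where φ_I is the standard Gaussian density on R^m. Then M_3 ≤ √6 · m^{3/2}. -/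
open MeasureTheory Real

/-- The standard Gaussian density on `ℝ^m`. -/
noncomputable def stdGaussianDensityE (m : ℕ) : EuclideanSpace ℝ (Fin m) → ℝ :=
  fun z => (2 * π) ^ (-(m : ℝ) / 2) * Real.exp (-‖z‖ ^ 2 / 2)


lemma gauss1_eq (n : ℕ) :
    ∫ y in Set.Ioi (0 : ℝ), y ^ n * Real.exp (-y ^ 2 / 2) =
      (1 / 2 : ℝ) ^ (-((n : ℝ) + 1) / 2) * (1 / 2) * Real.Gamma (((n : ℝ) + 1) / 2) := by
  rw [← integral_rpow_mul_exp_neg_mul_rpow (p := 2) (q := n) (b := 1 / 2) two_pos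
    (by have : (0 : ℝ) ≤ n := n.cast_nonneg
        linarith) (by norm_num)]
  refine setIntegral_congr_fun measurableSet_Ioi (fun x _ => ?_)
  simp only [rpow_natCast, rpow_two]
  congr 2
  ring

lemma gauss1_rec (n : ℕ) :
    ∫ y in Set.Ioi (0 : ℝ), y ^ (n + 2) * Real.exp (-y ^ 2 / 2) =
      ((n : ℝ) + 1) * ∫ y in Set.Ioi (0 : ℝ), y ^ n * Real.exp (-y ^ 2 / 2) := by
  have hn : (0 : ℝ) ≤ n := n.cast_nonneg
  rw [gauss1_eq, gauss1_eq]
  push_cast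
  have h1 : ((n : ℝ) + 2 + 1) / 2 = ((n : ℝ) + 1) / 2 + 1 := by ring
  have h2 : -((n : ℝ) + 2 + 1) / 2 = -((n : ℝ) + 1) / 2 + -1 := by ring
  rw [h1, h2, Real.Gamma_add_one (by positivity), Real.rpow_add (by norm_num),
    Real.rpow_neg_one]
  ring

lemma gauss1_int (n : ℕ) :
    IntegrableOn (fun y : ℝ => y ^ n * Real.exp (-y ^ 2 / 2)) (Set.Ioi 0) := by
  have hn : (0 : ℝ) ≤ n := n.cast_nonneg
  refine (integrableOn_rpow_mul_exp_neg_mul_sq (b := 1 / 2) (by norm_num) (s := n)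
    (by linarith)).congr_fun (fun x _ => ?_) measurableSet_Ioi
  simp only [rpow_natCast]
  congr 2
  ring

lemma gaussE_int (m : ℕ) (hm : 0 < m) (k : ℕ) :
    Integrable (fun z : EuclideanSpace ℝ (Fin m) => ‖z‖ ^ k * Real.exp (-‖z‖ ^ 2 / 2)) := by
  have : Nonempty (Fin m) := ⟨⟨0, hm⟩⟩
  rw [integrable_fun_norm_addHaar volume (f := fun y => y ^ k * Real.exp (-y ^ 2 / 2))]
  refine (gauss1_int (m - 1 + k)).congr_fun (fun x _ => ?_) measurableSet_Ioi
  simp [pow_add, mul_assoc]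

lemma gaussE_rec (m : ℕ) (hm : 0 < m) (k : ℕ) :
    ∫ z : EuclideanSpace ℝ (Fin m), ‖z‖ ^ (k + 2) * Real.exp (-‖z‖ ^ 2 / 2) =
      ((m : ℝ) + k) *
        ∫ z : EuclideanSpace ℝ (Fin m), ‖z‖ ^ k * Real.exp (-‖z‖ ^ 2 / 2) := by
  have : Nonempty (Fin m) := ⟨⟨0, hm⟩⟩
  rw [integral_fun_norm_addHaar volume (f := fun y => y ^ (k + 2) * Real.exp (-y ^ 2 / 2)),
    integral_fun_norm_addHaar volume (f := fun y => y ^ k * Real.exp (-y ^ 2 / 2))]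
  simp only [finrank_euclideanSpace, Fintype.card_fin, smul_eq_mul, nsmul_eq_mul, ← mul_assoc,
    ← pow_add]
  have := gauss1_rec (m - 1 + k)
  rw [add_assoc] at this
  rw [this]
  push_cast [Nat.cast_sub (show 1 ≤ m from hm)]
  ring

lemma gaussE_zero (m : ℕ) :
    ∫ z : EuclideanSpace ℝ (Fin m), Real.exp (-‖z‖ ^ 2 / 2) = (2 * π) ^ ((m : ℝ) / 2) := by
  have := GaussianFourier.integral_rexp_neg_mul_sq_norm
    (V := EuclideanSpace ℝ (Fin m)) (b := 1 / 2) (by norm_num)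
  rw [finrank_euclideanSpace, Fintype.card_fin] at this
  rw [show 2 * π = π / (1 / 2) by ring, ← this]
  congr 1
  ext z
  congr 1
  ring

lemma stdG_hasFDerivAt (m : ℕ) (z : EuclideanSpace ℝ (Fin m)) :
    HasFDerivAt (stdGaussianDensityE m) (-(stdGaussianDensityE m z) • innerSL ℝ z) z := by
  have h := (((hasStrictFDerivAt_norm_sq z).hasFDerivAt.neg.mul_const (1 / 2 : ℝ)).exp).const_mul
    ((2 * π) ^ (-(m : ℝ) / 2))
  have e : stdGaussianDensityE m = fun z : EuclideanSpace ℝ (Fin m) =>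
      (2 * π) ^ (-(m : ℝ) / 2) * Real.exp (-‖z‖ ^ 2 * (1 / 2)) := by
    ext z
    simp only [stdGaussianDensityE]
    congr 2
    ring
  rw [e]
  refine h.congr_fderiv ?_
  ext v
  simp
  ring

lemma stdG_mul_fderiv (m : ℕ) (p : EuclideanSpace ℝ (Fin m) → ℝ)
    (p' : EuclideanSpace ℝ (Fin m) →L[ℝ] ℝ) (z : EuclideanSpace ℝ (Fin m))
    (hp : HasFDerivAt p p' z) (j : Fin m) :
    fderiv ℝ (fun y => p y * stdGaussianDensityE m y) z (EuclideanSpace.single j 1) =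
      (p' (EuclideanSpace.single j 1) - p z * z j) * stdGaussianDensityE m z := by
  rw [(hp.fun_mul (stdG_hasFDerivAt m z)).fderiv]
  simp [EuclideanSpace.inner_single_right]
  ring

lemma coord_hasFDerivAt (m : ℕ) (i : Fin m) (z : EuclideanSpace ℝ (Fin m)) :
    HasFDerivAt (fun y : EuclideanSpace ℝ (Fin m) => y i)
      (EuclideanSpace.proj i : EuclideanSpace ℝ (Fin m) →L[ℝ] ℝ) z :=
  (EuclideanSpace.proj i : EuclideanSpace ℝ (Fin m) →L[ℝ] ℝ).hasFDerivAt

lemma stdG_third (m : ℕ) (i j k : Fin m) (z : EuclideanSpace ℝ (Fin m)) :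
    fderiv ℝ (fun y => fderiv ℝ (fun y' => fderiv ℝ (stdGaussianDensityE m) y'
            (EuclideanSpace.single i 1)) y (EuclideanSpace.single j 1)) z
          (EuclideanSpace.single k 1) =
      ((if i = k then (1 : ℝ) else 0) * z j + (if j = k then (1 : ℝ) else 0) * z i
        + (if i = j then (1 : ℝ) else 0) * z k - z i * z j * z k)
        * stdGaussianDensityE m z := by
  have h1 : (fun y' => fderiv ℝ (stdGaussianDensityE m) y' (EuclideanSpace.single i 1)) =
      fun y' => (-(y' i)) * stdGaussianDensityE m y' := by
    ext y
    rw [(stdG_hasFDerivAt m y).fderiv]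
    simp [EuclideanSpace.inner_single_right]
    ring
  have h2 : (fun y => fderiv ℝ (fun y' => (-(y' i)) * stdGaussianDensityE m y') y
      (EuclideanSpace.single j 1)) =
      fun y => (y i * y j - (if i = j then (1 : ℝ) else 0)) * stdGaussianDensityE m y := by
    ext y
    rw [stdG_mul_fderiv m _ _ y (coord_hasFDerivAt m i y).fun_neg j]
    simp
    left
    ring
  rw [h1, h2, stdG_mul_fderiv m _ _ z
    (((coord_hasFDerivAt m i z).fun_mul (coord_hasFDerivAt m j z)).sub_const _) k]
  have hproj : ∀ l : Fin m, (EuclideanSpace.proj l : EuclideanSpace ℝ (Fin m) →L[ℝ] ℝ)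
      (EuclideanSpace.single k 1) = if l = k then (1 : ℝ) else 0 := by
    intro l
    simp
  simp only [add_apply, smul_apply, smul_eq_mul, hproj]
  ring

lemma sum_third (m : ℕ) (z : EuclideanSpace ℝ (Fin m)) :
    ∑ i, ∑ j, ∑ k, ((if i = k then (1 : ℝ) else 0) * z j + (if j = k then (1 : ℝ) else 0) * z i
        + (if i = j then (1 : ℝ) else 0) * z k - z i * z j * z k) ^ 2 =
      ‖z‖ ^ 6 - 6 * ‖z‖ ^ 4 + (3 * m + 6) * ‖z‖ ^ 2 := by
  have hr : ‖z‖ ^ 2 = ∑ i, z i ^ 2 := EuclideanSpace.real_norm_sq_eq z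
  have e : ∀ i j k : Fin m, ((if i = k then (1 : ℝ) else 0) * z j
        + (if j = k then (1 : ℝ) else 0) * z i
        + (if i = j then (1 : ℝ) else 0) * z k - z i * z j * z k) ^ 2 =
      z i ^ 2 * z j ^ 2 * z k ^ 2
      + (if i = k then z j ^ 2 - 2 * z i ^ 2 * z j ^ 2 else 0)
      + (if j = k then z i ^ 2 - 2 * z i ^ 2 * z j ^ 2 else 0)
      + (if i = j then z k ^ 2 - 2 * z i ^ 2 * z k ^ 2 else 0)
      + (if i = j then (if j = k then 6 * z i ^ 2 else 0) else 0) := by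
    intro i j k
    by_cases h1 : i = j
    · subst h1
      by_cases h2 : i = k
      · subst h2
        simp
        ring
      · simp [h2]
        ring
    · by_cases h2 : i = k
      · subst h2
        simp [h1, Ne.symm h1]
        ring
      · by_cases h3 : j = k
        · subst h3
          simp [h1]
          ring
        · simp [h1, h2, h3]
          ring
  set r := ∑ i, z i ^ 2 with hrdef
  have a1 : ∑ i, ∑ j, ∑ k, z i ^ 2 * z j ^ 2 * z k ^ 2 = r ^ 3 := by
    simp only [← Finset.mul_sum, ← Finset.sum_mul, ← hrdef]
    ring
  have a2 : ∑ i, ∑ j, (z j ^ 2 - 2 * z i ^ 2 * z j ^ 2) = m * r - 2 * r ^ 2 := by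
    simp only [Finset.sum_sub_distrib, ← Finset.mul_sum, ← Finset.sum_mul, ← hrdef]
    simp
    ring
  have a3 : ∑ i, ∑ j, (z i ^ 2 - 2 * z i ^ 2 * z j ^ 2) = m * r - 2 * r ^ 2 := by
    simp only [Finset.sum_sub_distrib, ← Finset.mul_sum, ← Finset.sum_mul, ← hrdef]
    simp [← Finset.mul_sum, ← hrdef]
    ring
  have b1 : ∑ i : Fin m, ∑ j : Fin m, ∑ k : Fin m,
      (if i = k then z j ^ 2 - 2 * z i ^ 2 * z j ^ 2 else 0) = m * r - 2 * r ^ 2 := by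
    rw [← a2]
    simp
  have b2 : ∑ i : Fin m, ∑ j : Fin m, ∑ k : Fin m,
      (if j = k then z i ^ 2 - 2 * z i ^ 2 * z j ^ 2 else 0) = m * r - 2 * r ^ 2 := by
    rw [← a3]
    simp
  have b3 : ∑ i : Fin m, ∑ j : Fin m, ∑ k : Fin m,
      (if i = j then z k ^ 2 - 2 * z i ^ 2 * z k ^ 2 else 0) = m * r - 2 * r ^ 2 := by
    rw [← a2]
    refine Finset.sum_congr rfl fun i _ => ?_
    rw [Finset.sum_comm]
    simp
  have b4 : ∑ i : Fin m, ∑ j : Fin m, ∑ k : Fin m,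
      (if i = j then (if j = k then 6 * z i ^ 2 else 0) else 0) = 6 * r := by
    rw [hrdef, Finset.mul_sum]
    refine Finset.sum_congr rfl fun i _ => ?_
    rw [Finset.sum_comm]
    simp
  simp only [e, Finset.sum_add_distrib]
  rw [a1, b1, b2, b3, b4, show ‖z‖ ^ 6 = (‖z‖ ^ 2) ^ 3 by ring,
    show ‖z‖ ^ 4 = (‖z‖ ^ 2) ^ 2 by ring, hr]
  ring

/-- With `M₃ := ∫_{ℝ^m} (∑_{i,j,k} (∂³φ_I/∂y_i∂y_j∂y_k (z))²)^{1/2} dz`, where `φ_I` is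
the standard Gaussian density on `ℝ^m`, one has `M₃ ≤ √6 m^{3/2}`. -/
theorem stmt17 (m : ℕ) :
    (∫ z : EuclideanSpace ℝ (Fin m),
      Real.sqrt (∑ i, ∑ j, ∑ k,
        (fderiv ℝ (fun y => fderiv ℝ (fun y' => fderiv ℝ (stdGaussianDensityE m) y'
            (EuclideanSpace.single i 1)) y (EuclideanSpace.single j 1)) z
          (EuclideanSpace.single k 1)) ^ 2)) ≤
      Real.sqrt 6 * (m : ℝ) ^ ((3 : ℝ) / 2) := by
  rcases Nat.eq_zero_or_pos m with rfl | hm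
  · simp
  have hm1 : (1 : ℝ) ≤ m := by exact_mod_cast hm
  set C : ℝ := (2 * π) ^ (-(m : ℝ) / 2) with hC
  have hCpos : 0 < C := by positivity
  set Q : EuclideanSpace ℝ (Fin m) → ℝ :=
    fun z => ‖z‖ ^ 6 - 6 * ‖z‖ ^ 4 + (3 * m + 6) * ‖z‖ ^ 2 with hQ
  have hQ0 : ∀ z, 0 ≤ Q z := by
    intro z
    rw [hQ]
    simp only
    rw [← sum_third m z]
    positivity
  have hφ : ∀ z, 0 ≤ stdGaussianDensityE m z := by
    intro z
    unfold stdGaussianDensityE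
    positivity
  have e1 : ∀ z : EuclideanSpace ℝ (Fin m), Real.sqrt (∑ i, ∑ j, ∑ k,
        (fderiv ℝ (fun y => fderiv ℝ (fun y' => fderiv ℝ (stdGaussianDensityE m) y'
            (EuclideanSpace.single i 1)) y (EuclideanSpace.single j 1)) z
          (EuclideanSpace.single k 1)) ^ 2) = Real.sqrt (Q z) * stdGaussianDensityE m z := by
    intro z
    simp only [stdG_third, mul_pow, ← Finset.sum_mul]
    rw [sum_third, Real.sqrt_mul (hQ0 z), Real.sqrt_sq (hφ z)]
  simp only [e1]
  set K : ℝ := m * (m + 1) * (m + 2) with hK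
  have hKpos : 0 < K := by positivity
  set c : ℝ := Real.sqrt K with hc
  have hcpos : 0 < c := Real.sqrt_pos.mpr hKpos
  have hcc : c ^ 2 = K := Real.sq_sqrt hKpos.le
  have hbound : ∀ z, Real.sqrt (Q z) * stdGaussianDensityE m z ≤
      (Q z / c + c) / 2 * stdGaussianDensityE m z := by
    intro z
    refine mul_le_mul_of_nonneg_right ?_ (hφ z)
    have hs := Real.sq_sqrt (hQ0 z)
    set s := Real.sqrt (Q z)
    rw [← hs, le_div_iff₀ two_pos, div_add' _ _ _ hcpos.ne', le_div_iff₀ hcpos]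
    nlinarith [sq_nonneg (s - c)]
  have i0 := gaussE_int m hm 0
  have i2 := gaussE_int m hm 2
  have i4 := gaussE_int m hm 4
  have i6 := gaussE_int m hm 6
  have r2 := gaussE_rec m hm 0
  have r4 := gaussE_rec m hm 2
  have r6 := gaussE_rec m hm 4
  have z0 : ∫ z : EuclideanSpace ℝ (Fin m), ‖z‖ ^ 0 * Real.exp (-‖z‖ ^ 2 / 2) = C⁻¹ := by
    simp only [pow_zero, one_mul]
    rw [gaussE_zero, hC, ← Real.rpow_neg (by positivity)]
    congr 1
    ring
  norm_num only at r2 r4 r6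
  have e2 : (fun z => (Q z / c + c) / 2 * stdGaussianDensityE m z) = fun z =>
      (C / (2 * c)) * (‖z‖ ^ 6 * Real.exp (-‖z‖ ^ 2 / 2))
      + (-(6 * C / (2 * c))) * (‖z‖ ^ 4 * Real.exp (-‖z‖ ^ 2 / 2))
      + ((3 * m + 6) * C / (2 * c)) * (‖z‖ ^ 2 * Real.exp (-‖z‖ ^ 2 / 2))
      + (c * C / 2) * (‖z‖ ^ 0 * Real.exp (-‖z‖ ^ 2 / 2)) := by
    ext z
    simp only [hQ, stdGaussianDensityE, ← hC, pow_zero]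
    field_simp
    ring
  have hint : Integrable (fun z => (Q z / c + c) / 2 * stdGaussianDensityE m z) := by
    rw [e2]
    exact (((i6.const_mul _).add (i4.const_mul _)).add (i2.const_mul _)).add (i0.const_mul _)
  have hval : ∫ z, (Q z / c + c) / 2 * stdGaussianDensityE m z = c := by
    rw [e2, integral_add (by exact ((i6.const_mul _).add (i4.const_mul _)).add (i2.const_mul _))
      (i0.const_mul _), integral_add (by exact (i6.const_mul _).add (i4.const_mul _))
      (i2.const_mul _), integral_add (i6.const_mul _) (i4.const_mul _)]
    simp only [integral_const_mul]
    rw [r6, r4, r2, z0]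
    field_simp
    rw [hcc, hK]
    ring
  have hle : ∫ z, Real.sqrt (Q z) * stdGaussianDensityE m z ≤ c := by
    rw [← hval]
    exact integral_mono_of_nonneg
      (Filter.Eventually.of_forall fun z => mul_nonneg (Real.sqrt_nonneg _) (hφ z)) hint
      (Filter.Eventually.of_forall hbound)
  refine hle.trans ?_
  have h32 : ((m : ℝ) ^ ((3 : ℝ) / 2)) = Real.sqrt ((m : ℝ) ^ 3) := by
    rw [Real.sqrt_eq_rpow, ← Real.rpow_natCast, ← Real.rpow_mul (by positivity)]
    norm_num
  rw [h32, ← Real.sqrt_mul (by norm_num), hc]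
  apply Real.sqrt_le_sqrt
  rw [hK]
  have : (0 : ℝ) ≤ (m - 1) * m * (5 * m + 2) :=
    mul_nonneg (mul_nonneg (by linarith) (by linarith)) (by linarith)
  nlinarith
end

section
/- Let h : R^m → R be measurable with ‖h‖_∞ ≤ 1, Σ ∈ R^{m×m} positive definite, and t ∈ (0,1). Define f_{t,h,Σ}(y) := (1/2)∫_t^1 (1−s)^{-1} ∫_{R^m} (h(√s·z + √(1−s)·y) − h(z)) φ_Σ(z) dz ds. Then for all i,j,k, the third partial derivative satisfies sup_{y∈R^m} |∂³f_{t,h,Σ}/∂y_i∂y_j∂y_k (y)| ≤ 6 m³ ‖Σ^{-1}‖_op^{3/2} / √t. -/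
open MeasureTheory Real

/-- The density of a centered `m`-dimensional Gaussian vector with positive definite
covariance matrix `S`. -/
noncomputable def gaussianDensityMat (m : ℕ) (S : Matrix (Fin m) (Fin m) ℝ) :
    EuclideanSpace ℝ (Fin m) → ℝ :=
  fun z => (2 * π) ^ (-(m : ℝ) / 2) * S.det ^ (-(1 : ℝ) / 2) *
    Real.exp (-(∑ k, ∑ l, S⁻¹ k l * z k * z l) / 2)

/-- The solution `f_{t,h,Σ}` of the smoothed multivariate Stein equation. -/
noncomputable def steinSol (m : ℕ) (t : ℝ) (h : EuclideanSpace ℝ (Fin m) → ℝ)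
    (S : Matrix (Fin m) (Fin m) ℝ) : EuclideanSpace ℝ (Fin m) → ℝ :=
  fun y => (1 / 2) * ∫ s in t..1, (1 - s)⁻¹ *
    ∫ z, (h (Real.sqrt s • z + Real.sqrt (1 - s) • y) - h z) * gaussianDensityMat m S z

namespace SteinAux

/-- Euclidean space. -/
abbrev Eu (m : ℕ) := EuclideanSpace ℝ (Fin m)

/-- `C¹` functions decaying fast enough, together with their derivative. -/
structure Nice {m : ℕ} (ψ : Eu m → ℝ) : Prop where
  cd : ContDiff ℝ 1 ψ
  bd : ∃ C, ∀ x, ‖ψ x‖ ≤ C * (1 + ‖x‖) ^ (-((m : ℝ) + 1))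
  bd' : ∃ C, ∀ x, ‖fderiv ℝ ψ x‖ ≤ C * (1 + ‖x‖) ^ (-((m : ℝ) + 1))

theorem integrable_japanese (m : ℕ) :
    Integrable (fun x : Eu m => (1 + ‖x‖) ^ (-((m : ℝ) + 1))) := by
  apply integrable_one_add_norm
  simp

theorem integrable_of_decay {m : ℕ} {F : Type*} [NormedAddCommGroup F] {ψ : Eu m → F}
    (hc : Continuous ψ)
    (hb : ∃ C, ∀ x, ‖ψ x‖ ≤ C * (1 + ‖x‖) ^ (-((m : ℝ) + 1))) : Integrable ψ := by
  obtain ⟨C, hC⟩ := hb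
  exact ((integrable_japanese m).const_mul C).mono' hc.aestronglyMeasurable
    (Filter.Eventually.of_forall hC)

theorem Nice.integrable {m : ℕ} {ψ : Eu m → ℝ} (h : Nice ψ) : Integrable ψ :=
  integrable_of_decay h.cd.continuous h.bd

theorem Nice.cont' {m : ℕ} {ψ : Eu m → ℝ} (h : Nice ψ) : Continuous (fderiv ℝ ψ) :=
  h.cd.continuous_fderiv (by norm_num)

theorem Nice.integrable' {m : ℕ} {ψ : Eu m → ℝ} (h : Nice ψ) : Integrable (fderiv ℝ ψ) :=
  integrable_of_decay h.cont' h.bd'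

theorem shift_bound (m : ℕ) (z w : Eu m) (R : ℝ) (hw : ‖w‖ ≤ R) :
    (1 + ‖z - w‖) ^ (-((m : ℝ) + 1)) ≤ (1 + R) ^ ((m : ℝ) + 1) * (1 + ‖z‖) ^ (-((m : ℝ) + 1)) := by
  have hR : 0 ≤ R := (norm_nonneg w).trans hw
  have h1 : 1 + ‖z‖ ≤ (1 + R) * (1 + ‖z - w‖) := by
    have : ‖z‖ ≤ ‖z - w‖ + ‖w‖ := by simpa using norm_add_le (z - w) w
    nlinarith [norm_nonneg (z - w), mul_nonneg hR (norm_nonneg (z - w))]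
  have hz : 0 < 1 + ‖z‖ := by positivity
  have hzw : 0 < 1 + ‖z - w‖ := by positivity
  have hm : 0 ≤ (m : ℝ) + 1 := by positivity
  have h2 := Real.rpow_le_rpow hz.le h1 hm
  rw [Real.mul_rpow (by positivity) hzw.le] at h2
  rw [Real.rpow_neg hz.le, Real.rpow_neg hzw.le, ← div_eq_mul_inv, inv_eq_one_div,
    div_le_div_iff₀ (by positivity) (by positivity)]
  linarith

theorem bdd_mul_integrable {m : ℕ} {g ψ : Eu m → ℝ} (hg : Measurable g) (hb : ∀ z, |g z| ≤ 1)
    (hψ : Integrable ψ) : Integrable (fun z => g z * ψ z) := by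
  refine hψ.norm.mono' (hg.aestronglyMeasurable.mul hψ.aestronglyMeasurable) ?_
  refine Filter.Eventually.of_forall fun z => ?_
  rw [norm_mul]
  exact mul_le_of_le_one_left (norm_nonneg _) (hb z)

theorem inner_hasFDerivAt {m : ℕ} {ψ : Eu m → ℝ} (h : Nice ψ) {g : Eu m → ℝ}
    (hg : Measurable g) (hb : ∀ z, |g z| ≤ 1) (a : ℝ) (y₀ : Eu m) :
    HasFDerivAt (fun y => ∫ z, g z * ψ (z - a • y))
      (∫ z, (g z * (-a)) • fderiv ℝ ψ (z - a • y₀)) y₀ := by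
  obtain ⟨C, hC⟩ := h.bd'
  have hC0 : 0 ≤ C := by
    have := (norm_nonneg _).trans (hC 0)
    simpa using this
  set R := |a| * (‖y₀‖ + 1) with hR
  refine hasFDerivAt_integral_of_dominated_of_fderiv_le (s := Metric.ball y₀ 1)
    (bound := fun z => |a| * (C * ((1 + R) ^ ((m : ℝ) + 1) * (1 + ‖z‖) ^ (-((m : ℝ) + 1)))))
    (F' := fun y z => (g z * (-a)) • fderiv ℝ ψ (z - a • y))
    (Metric.ball_mem_nhds _ one_pos) ?_ ?_ ?_ ?_ ?_ ?_
  · refine Filter.Eventually.of_forall fun y => ?_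
    have : Continuous fun z => ψ (z - a • y) := h.cd.continuous.comp (by fun_prop)
    exact hg.aestronglyMeasurable.mul this.aestronglyMeasurable
  · exact bdd_mul_integrable hg hb (h.integrable.comp_sub_right _)
  · have : Continuous fun z => fderiv ℝ ψ (z - a • y₀) := h.cont'.comp (by fun_prop)
    exact (hg.mul_const _).aestronglyMeasurable.smul this.aestronglyMeasurable
  · refine Filter.Eventually.of_forall fun z y hy => ?_
    rw [norm_smul, norm_mul, norm_neg]
    have hyR : ‖a • y‖ ≤ R := by
      rw [norm_smul, hR, Real.norm_eq_abs]
      gcongr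
      have := norm_add_le (y - y₀) y₀
      rw [sub_add_cancel] at this
      have h2 : ‖y - y₀‖ < 1 := by simpa [dist_eq_norm] using hy
      linarith
    have h3 := (hC (z - a • y)).trans
      (mul_le_mul_of_nonneg_left (shift_bound m z (a • y) R hyR) hC0)
    have h4 : ‖g z‖ * ‖a‖ ≤ |a| := mul_le_of_le_one_left (abs_nonneg _) (hb z)
    exact mul_le_mul h4 h3 (norm_nonneg _) (abs_nonneg _)
  · exact (((integrable_japanese m).const_mul _).const_mul _).const_mul _
  · refine Filter.Eventually.of_forall fun z y hy => ?_
    have h1 : HasFDerivAt (fun y : Eu m => z - a • y) (-(a • ContinuousLinearMap.id ℝ (Eu m))) y :=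
      ((hasFDerivAt_id y).const_smul a).const_sub z
    have h2 := (((h.cd.differentiable (by norm_num)) (z - a • y)).hasFDerivAt.comp y h1).const_mul
      (g z)
    have h3 : (g z * (-a)) • fderiv ℝ ψ (z - a • y) =
        g z • fderiv ℝ ψ (z - a • y) ∘SL (-(a • ContinuousLinearMap.id ℝ (Eu m))) := by
      ext v
      simp
      ring
    rw [h3]
    exact h2

/-- The ratio `√(1-s)/√s`. -/
noncomputable def av (s : ℝ) : ℝ := Real.sqrt (1 - s) / Real.sqrt s

theorem av_nonneg (s : ℝ) : 0 ≤ av s := by unfold av; positivity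

theorem av_meas : Measurable av := by unfold av; fun_prop

/-- inner integral -/
noncomputable def G {m : ℕ} (h : Eu m → ℝ) (ψ : Eu m → ℝ) (s : ℝ) (y : Eu m) : ℝ :=
  ∫ z, h (Real.sqrt s • z) * ψ (z - av s • y)

/-- derivative of the inner integral -/
noncomputable def G' {m : ℕ} (h : Eu m → ℝ) (ψ : Eu m → ℝ) (s : ℝ) (y : Eu m) : Eu m →L[ℝ] ℝ :=
  ∫ z, (h (Real.sqrt s • z) * (-av s)) • fderiv ℝ ψ (z - av s • y)

theorem G_meas {m : ℕ} {h : Eu m → ℝ} (hm : Measurable h) {ψ : Eu m → ℝ} (hψ : Continuous ψ)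
    (y : Eu m) : StronglyMeasurable (fun s => G h ψ s y) := by
  unfold G
  refine StronglyMeasurable.integral_prod_right (f := fun s z => h (Real.sqrt s • z) * ψ (z - av s • y)) ?_
  have := av_meas
  have h1 : Measurable (fun p : ℝ × Eu m => h (Real.sqrt p.1 • p.2)) := by fun_prop
  have h2 : Measurable (fun p : ℝ × Eu m => p.2 - av p.1 • y) := by fun_prop
  exact h1.stronglyMeasurable.mul (hψ.comp_stronglyMeasurable h2.stronglyMeasurable)

theorem G'_meas {m : ℕ} {h : Eu m → ℝ} (hm : Measurable h) {ψ : Eu m → ℝ} (hψ : Nice ψ)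
    (y : Eu m) : StronglyMeasurable (fun s => G' h ψ s y) := by
  unfold G'
  refine StronglyMeasurable.integral_prod_right
    (f := fun s z => (h (Real.sqrt s • z) * (-av s)) • fderiv ℝ ψ (z - av s • y)) ?_
  have := av_meas
  have h1 : Measurable (fun p : ℝ × Eu m => h (Real.sqrt p.1 • p.2) * (-av p.1)) := by fun_prop
  have h2 : Measurable (fun p : ℝ × Eu m => p.2 - av p.1 • y) := by fun_prop
  exact h1.stronglyMeasurable.smul (hψ.cont'.comp_stronglyMeasurable h2.stronglyMeasurable)

theorem G_hasFDerivAt {m : ℕ} {h : Eu m → ℝ} (hm : Measurable h) (hb : ∀ z, |h z| ≤ 1)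
    {ψ : Eu m → ℝ} (hψ : Nice ψ) (s : ℝ) (y : Eu m) :
    HasFDerivAt (fun y => G h ψ s y) (G' h ψ s y) y :=
  inner_hasFDerivAt hψ (g := fun z => h (Real.sqrt s • z)) (by fun_prop) (fun z => hb _) _ y

theorem G_bound {m : ℕ} {h : Eu m → ℝ} (hb : ∀ z, |h z| ≤ 1)
    {ψ : Eu m → ℝ} (hψ : Integrable ψ) (s : ℝ) (y : Eu m) :
    ‖G h ψ s y‖ ≤ ∫ z, ‖ψ z‖ := by
  unfold G
  rw [← integral_sub_right_eq_self (fun z => ‖ψ z‖) (av s • y)]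
  refine norm_integral_le_of_norm_le (hψ.norm.comp_sub_right _) ?_
  refine Filter.Eventually.of_forall fun z => ?_
  rw [norm_mul]
  exact mul_le_of_le_one_left (norm_nonneg _) (hb _)

theorem G'_bound {m : ℕ} {h : Eu m → ℝ} (hb : ∀ z, |h z| ≤ 1)
    {ψ : Eu m → ℝ} (hψ : Nice ψ) (s : ℝ) (y : Eu m) :
    ‖G' h ψ s y‖ ≤ av s * ∫ z, ‖fderiv ℝ ψ z‖ := by
  unfold G'
  rw [← integral_sub_right_eq_self (fun z => ‖fderiv ℝ ψ z‖) (av s • y), ← integral_const_mul]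
  refine norm_integral_le_of_norm_le ((hψ.integrable'.norm.comp_sub_right _).const_mul _) ?_
  refine Filter.Eventually.of_forall fun z => ?_
  rw [norm_smul, norm_mul, norm_neg, Real.norm_of_nonneg (av_nonneg s)]
  gcongr
  exact mul_le_of_le_one_left (av_nonneg s) (hb _)

theorem G'_apply {m : ℕ} {h : Eu m → ℝ} (hm : Measurable h) (hb : ∀ z, |h z| ≤ 1)
    {ψ : Eu m → ℝ} (hψ : Nice ψ) (s : ℝ) (y v : Eu m) :
    G' h ψ s y v = - av s * G h (fun x => fderiv ℝ ψ x v) s y := by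
  unfold G' G
  rw [ContinuousLinearMap.integral_apply, ← integral_const_mul]
  · congr 1
    ext z
    simp
    ring
  · refine ((hψ.integrable'.norm.comp_sub_right (av s • y)).const_mul (av s)).mono' ?_ ?_
    · have : Continuous fun z => fderiv ℝ ψ (z - av s • y) := hψ.cont'.comp (by fun_prop)
      have h1 : Measurable fun z => h (Real.sqrt s • z) * (-av s) := by fun_prop
      exact h1.aestronglyMeasurable.smul this.aestronglyMeasurable
    · refine Filter.Eventually.of_forall fun z => ?_
      rw [norm_smul, norm_mul, norm_neg, Real.norm_of_nonneg (av_nonneg s)]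
      gcongr
      exact mul_le_of_le_one_left (av_nonneg s) (hb _)

/-- outer integral -/
noncomputable def T {m : ℕ} (t : ℝ) (p : ℝ → ℝ) (c : ℝ) (h ψ : Eu m → ℝ) (y : Eu m) : ℝ :=
  ∫ s in Set.Ioc t 1, p s * (G h ψ s y - c)

theorem T_hasFDerivAt {m : ℕ} {t : ℝ} {p : ℝ → ℝ} {c : ℝ} {h ψ : Eu m → ℝ}
    (hm : Measurable h) (hb : ∀ z, |h z| ≤ 1) (hψ : Nice ψ) (hp : Measurable p)
    (hpa : IntegrableOn (fun s => p s * av s) (Set.Ioc t 1)) (y₀ : Eu m)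
    (hint : IntegrableOn (fun s => p s * (G h ψ s y₀ - c)) (Set.Ioc t 1)) :
    HasFDerivAt (T t p c h ψ) (∫ s in Set.Ioc t 1, p s • G' h ψ s y₀) y₀ := by
  refine hasFDerivAt_integral_of_dominated_of_fderiv_le (s := Set.univ)
    (bound := fun s => ‖p s * av s‖ * ∫ z, ‖fderiv ℝ ψ z‖)
    (F' := fun y s => p s • G' h ψ s y)
    Filter.univ_mem ?_ hint ?_ ?_ ?_ ?_
  · refine Filter.Eventually.of_forall fun y => ?_
    exact (hp.stronglyMeasurable.mul
      ((G_meas hm hψ.cd.continuous y).sub stronglyMeasurable_const)).aestronglyMeasurable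
  · exact (hp.stronglyMeasurable.smul (G'_meas hm hψ y₀)).aestronglyMeasurable
  · refine Filter.Eventually.of_forall fun s y _ => ?_
    rw [norm_smul, norm_mul, Real.norm_of_nonneg (av_nonneg s), mul_assoc]
    exact mul_le_mul_of_nonneg_left (G'_bound hb hψ s y) (norm_nonneg _)
  · exact hpa.norm.mul_const _
  · refine Filter.Eventually.of_forall fun s y _ => ?_
    exact ((G_hasFDerivAt hm hb hψ s y).sub_const c).const_mul (p s)

theorem T_fderiv {m : ℕ} {t : ℝ} {p : ℝ → ℝ} {c : ℝ} {h ψ : Eu m → ℝ}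
    (hm : Measurable h) (hb : ∀ z, |h z| ≤ 1) (hψ : Nice ψ) (hp : Measurable p)
    (hpa : IntegrableOn (fun s => p s * av s) (Set.Ioc t 1)) (y₀ v : Eu m)
    (hint : IntegrableOn (fun s => p s * (G h ψ s y₀ - c)) (Set.Ioc t 1)) :
    fderiv ℝ (T t p c h ψ) y₀ v = - T t (fun s => p s * av s) 0 h (fun x => fderiv ℝ ψ x v) y₀ := by
  rw [(T_hasFDerivAt hm hb hψ hp hpa y₀ hint).fderiv, ContinuousLinearMap.integral_apply]
  · unfold T
    rw [← integral_neg]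
    congr 1
    ext s
    simp [G'_apply hm hb hψ]
    ring
  · refine (hpa.norm.mul_const (∫ z, ‖fderiv ℝ ψ z‖)).mono'
      (hp.stronglyMeasurable.smul (G'_meas hm hψ y₀)).aestronglyMeasurable ?_
    refine Filter.Eventually.of_forall fun s => ?_
    rw [norm_smul, norm_mul, Real.norm_of_nonneg (av_nonneg s), mul_assoc]
    exact mul_le_mul_of_nonneg_left (G'_bound hb hψ s y₀) (norm_nonneg _)

theorem T_integrable {m : ℕ} {t : ℝ} {p : ℝ → ℝ} {h ψ : Eu m → ℝ}
    (hm : Measurable h) (hb : ∀ z, |h z| ≤ 1) (hc : Continuous ψ) (hψ : Integrable ψ)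
    (hp : IntegrableOn p (Set.Ioc t 1)) (y₀ : Eu m) :
    IntegrableOn (fun s => p s * (G h ψ s y₀ - 0)) (Set.Ioc t 1) := by
  refine (hp.norm.mul_const (∫ z, ‖ψ z‖)).mono'
    (hp.aestronglyMeasurable.mul ((G_meas hm hc y₀).sub stronglyMeasurable_const).aestronglyMeasurable) ?_
  refine Filter.Eventually.of_forall fun s => ?_
  rw [norm_mul, sub_zero]
  exact mul_le_mul_of_nonneg_left (G_bound hb hψ s y₀) (norm_nonneg _)

theorem T_bound {m : ℕ} {t : ℝ} {p : ℝ → ℝ} {h ψ : Eu m → ℝ}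
    (hb : ∀ z, |h z| ≤ 1) (hψ : Integrable ψ)
    (hp : IntegrableOn p (Set.Ioc t 1)) (y₀ : Eu m) :
    |T t p 0 h ψ y₀| ≤ (∫ s in Set.Ioc t 1, |p s|) * ∫ z, ‖ψ z‖ := by
  unfold T
  rw [← integral_mul_const, ← Real.norm_eq_abs]
  refine norm_integral_le_of_norm_le (hp.norm.mul_const _) ?_
  refine Filter.Eventually.of_forall fun s => ?_
  rw [norm_mul, sub_zero]
  exact mul_le_mul_of_nonneg_left (G_bound hb hψ s y₀) (norm_nonneg _)

/-- integrability at one point gives integrability everywhere -/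
theorem T_integrable_transfer {m : ℕ} {t : ℝ} {p : ℝ → ℝ} {c : ℝ} {h ψ : Eu m → ℝ}
    (hm : Measurable h) (hb : ∀ z, |h z| ≤ 1) (hψ : Nice ψ) (hp : Measurable p)
    (hpa : IntegrableOn (fun s => p s * av s) (Set.Ioc t 1)) (y₀ y : Eu m)
    (hint : IntegrableOn (fun s => p s * (G h ψ s y₀ - c)) (Set.Ioc t 1)) :
    IntegrableOn (fun s => p s * (G h ψ s y - c)) (Set.Ioc t 1) := by
  have key : IntegrableOn (fun s => p s * (G h ψ s y - G h ψ s y₀)) (Set.Ioc t 1) := by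
    refine ((hpa.norm.mul_const (∫ z, ‖fderiv ℝ ψ z‖)).mul_const ‖y - y₀‖).mono'
      (hp.stronglyMeasurable.mul ((G_meas hm hψ.cd.continuous y).sub
        (G_meas hm hψ.cd.continuous y₀))).aestronglyMeasurable ?_
    refine Filter.Eventually.of_forall fun s => ?_
    have h1 := (convex_univ (𝕜 := ℝ) (E := Eu m)).norm_image_sub_le_of_norm_hasFDerivWithin_le
      (f := fun y => G h ψ s y)
      (fun x _ => (G_hasFDerivAt hm hb hψ s x).hasFDerivWithinAt)
      (fun x _ => G'_bound hb hψ s x) (Set.mem_univ y₀) (Set.mem_univ y)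
    rw [norm_mul, norm_mul, Real.norm_of_nonneg (av_nonneg s), mul_assoc, mul_assoc]
    refine mul_le_mul_of_nonneg_left ?_ (norm_nonneg _)
    rw [← mul_assoc]
    exact h1
  refine (hint.add key).congr (Filter.Eventually.of_forall fun s => ?_)
  simp only [Pi.add_apply]
  ring

/-- The Gaussian density attached to an injective linear map `B`. -/
noncomputable def gd {m : ℕ} (c : ℝ) (B : Eu m →L[ℝ] Eu m) (x : Eu m) : ℝ :=
  c * Real.exp (-‖B x‖ ^ 2 / 2)

/-- The linear functionals appearing in derivatives. -/
noncomputable def wl {m : ℕ} (B : Eu m →L[ℝ] Eu m) (v : Eu m) : Eu m →L[ℝ] ℝ :=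
  (innerSL ℝ (B v)) ∘L B

theorem wl_apply {m : ℕ} (B : Eu m →L[ℝ] Eu m) (v x : Eu m) :
    wl B v x = inner ℝ (B v) (B x) := by
  simp [wl]

theorem wl_symm {m : ℕ} (B : Eu m →L[ℝ] Eu m) (v x : Eu m) :
    wl B v x = wl B x v := by
  rw [wl_apply, wl_apply, real_inner_comm]

theorem gd_hasFDerivAt {m : ℕ} (c : ℝ) (B : Eu m →L[ℝ] Eu m) (x : Eu m) :
    HasFDerivAt (gd c B) (-(gd c B x) • wl B x) x := by
  have h1 : HasFDerivAt (fun x => ‖B x‖ ^ 2) (2 • (innerSL ℝ (B x)) ∘L B) x :=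
    (B.hasFDerivAt (x := x)).norm_sq
  have h2 := ((h1.neg.mul_const (2 : ℝ)⁻¹).exp).const_mul c
  have h3 : gd c B = fun y => c * Real.exp (-‖B y‖ ^ 2 * 2⁻¹) := by
    ext y
    simp [gd, div_eq_mul_inv]
  rw [h3]
  have h4 : (-(c * Real.exp (-‖B x‖ ^ 2 * 2⁻¹))) • wl B x =
      c • (Real.exp (-‖B x‖ ^ 2 * 2⁻¹) • ((2 : ℝ)⁻¹ • -(2 • (innerSL ℝ (B x)) ∘L B))) := by
    ext v
    simp [wl]
    ring
  rw [h4]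
  exact h2

theorem gd_contDiff {m : ℕ} (c : ℝ) (B : Eu m →L[ℝ] Eu m) : ContDiff ℝ 1 (gd c B) := by
  unfold gd
  have : ContDiff ℝ 1 fun x => ‖B x‖ ^ 2 := B.contDiff.norm_sq ℝ
  fun_prop

theorem exp_decay (lam : ℝ) (hl : 0 < lam) (n : ℕ) :
    ∃ C, 0 ≤ C ∧ ∀ r : ℝ, 0 ≤ r → (1 + r) ^ n * Real.exp (-(lam * r ^ 2)) ≤ C := by
  refine ⟨Real.exp lam * ((n.factorial : ℝ) * (2 / lam) ^ n), by positivity, fun r hr => ?_⟩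
  set u := 1 + r with hu
  have hu1 : 1 ≤ u := by linarith
  have h1 : Real.exp (-(lam * r ^ 2)) ≤ Real.exp lam * Real.exp (-(lam / 2 * u ^ 2)) := by
    rw [← Real.exp_add]
    apply Real.exp_le_exp.2
    rw [hu]
    nlinarith [mul_nonneg hl.le (sq_nonneg (r - 1))]
  have h2 := Real.pow_div_factorial_le_exp (x := lam / 2 * u ^ 2) (by positivity) n
  have h3 : u ^ n ≤ (u ^ 2) ^ n := pow_le_pow_left₀ (by positivity) (by nlinarith) n
  have h4 : u ^ n * Real.exp (-(lam / 2 * u ^ 2)) ≤ (n.factorial : ℝ) * (2 / lam) ^ n := by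
    rw [Real.exp_neg, ← div_eq_mul_inv, div_le_iff₀ (Real.exp_pos _)]
    calc u ^ n ≤ (u ^ 2) ^ n := h3
      _ = ((n.factorial : ℝ) * (2 / lam) ^ n) * ((lam / 2 * u ^ 2) ^ n / n.factorial) := by
        rw [mul_pow, div_pow, div_pow]
        field_simp
      _ ≤ _ := by gcongr
  calc u ^ n * Real.exp (-(lam * r ^ 2))
      ≤ u ^ n * (Real.exp lam * Real.exp (-(lam / 2 * u ^ 2))) := by gcongr
    _ = Real.exp lam * (u ^ n * Real.exp (-(lam / 2 * u ^ 2))) := by ring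
    _ ≤ _ := by gcongr

theorem gd_decay {m : ℕ} (c : ℝ) (B : Eu m →L[ℝ] Eu m) (K : ℝ) (hK : 0 < K)
    (hB : ∀ x, ‖x‖ ≤ K * ‖B x‖) (k : ℕ) (D : ℝ) {F : Type*} [NormedAddCommGroup F]
    [NormedSpace ℝ F] (p : Eu m → F) (hp : ∀ x, ‖p x‖ ≤ D * (1 + ‖x‖) ^ k) :
    ∃ C, ∀ x, ‖gd c B x • p x‖ ≤ C * (1 + ‖x‖) ^ (-((m : ℝ) + 1)) := by
  obtain ⟨C, hC0, hC⟩ := exp_decay (1 / (2 * K ^ 2)) (by positivity) (k + (m + 1))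
  have hD : 0 ≤ D := by
    have := (norm_nonneg _).trans (hp 0)
    simpa using this
  refine ⟨|c| * (D * C), fun x => ?_⟩
  have h1 := hC ‖x‖ (norm_nonneg x)
  have hx : 0 < 1 + ‖x‖ := by positivity
  have h2 : Real.exp (-‖B x‖ ^ 2 / 2) ≤ Real.exp (-(1 / (2 * K ^ 2) * ‖x‖ ^ 2)) := by
    apply Real.exp_le_exp.2
    have h3 : ‖x‖ ^ 2 ≤ K ^ 2 * ‖B x‖ ^ 2 := by
      rw [← mul_pow]
      exact pow_le_pow_left₀ (norm_nonneg _) (hB x) 2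
    have h4 : 1 / (2 * K ^ 2) * ‖x‖ ^ 2 ≤ 1 / (2 * K ^ 2) * (K ^ 2 * ‖B x‖ ^ 2) := by gcongr
    have h5 : 1 / (2 * K ^ 2) * (K ^ 2 * ‖B x‖ ^ 2) = ‖B x‖ ^ 2 / 2 := by field_simp
    rw [h5] at h4
    linarith
  have h6 : (1 + ‖x‖) ^ (-((m : ℝ) + 1)) = ((1 + ‖x‖) ^ (m + 1))⁻¹ := by
    rw [Real.rpow_neg hx.le]
    congr 1
    exact_mod_cast Real.rpow_natCast (1 + ‖x‖) (m + 1)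
  rw [h6, ← div_eq_mul_inv, le_div_iff₀ (by positivity), norm_smul]
  unfold gd
  rw [norm_mul, Real.norm_eq_abs c, Real.norm_of_nonneg (Real.exp_pos _).le]
  calc |c| * Real.exp (-‖B x‖ ^ 2 / 2) * ‖p x‖ * (1 + ‖x‖) ^ (m + 1)
      ≤ |c| * Real.exp (-(1 / (2 * K ^ 2) * ‖x‖ ^ 2)) * (D * (1 + ‖x‖) ^ k) *
        (1 + ‖x‖) ^ (m + 1) := by
        gcongr
        exact hp x
    _ = |c| * (D * ((1 + ‖x‖) ^ (k + (m + 1)) * Real.exp (-(1 / (2 * K ^ 2) * ‖x‖ ^ 2)))) := by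
        rw [pow_add]; ring
    _ ≤ _ := by gcongr

theorem tg_growth0 {m : ℕ} {p : Eu m → ℝ} (hp : p.HasTemperateGrowth) :
    ∃ (k : ℕ) (C : ℝ), ∀ x, ‖p x‖ ≤ C * (1 + ‖x‖) ^ k := by
  obtain ⟨k, C, h⟩ := hp.2 0
  exact ⟨k, C, fun x => by simpa using h x⟩

theorem tg_growth1 {m : ℕ} {p : Eu m → ℝ} (hp : p.HasTemperateGrowth) :
    ∃ (k : ℕ) (C : ℝ), ∀ x, ‖fderiv ℝ p x‖ ≤ C * (1 + ‖x‖) ^ k := by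
  obtain ⟨k, C, h⟩ := hp.2 1
  exact ⟨k, C, fun x => by simpa [norm_iteratedFDeriv_one] using h x⟩

theorem tg_diff {m : ℕ} {p : Eu m → ℝ} (hp : p.HasTemperateGrowth) : ContDiff ℝ 1 p :=
  hp.1.of_le (by exact_mod_cast le_top)

theorem pg_hasFDerivAt {m : ℕ} (c : ℝ) (B : Eu m →L[ℝ] Eu m) {p : Eu m → ℝ}
    {p' : Eu m →L[ℝ] ℝ} {x : Eu m} (hp : HasFDerivAt p p' x) :
    HasFDerivAt (fun x => p x * gd c B x) (gd c B x • (p' - p x • wl B x)) x := by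
  have h := hp.mul (gd_hasFDerivAt c B x)
  have h3 : gd c B x • (p' - p x • wl B x) = p x • -(gd c B x) • wl B x + gd c B x • p' := by
    ext v
    simp
    ring
  rw [h3]
  exact h

theorem pg_fderiv {m : ℕ} (c : ℝ) (B : Eu m →L[ℝ] Eu m) {p : Eu m → ℝ}
    {p' : Eu m →L[ℝ] ℝ} {x : Eu m} (hp : HasFDerivAt p p' x) (v : Eu m) :
    fderiv ℝ (fun x => p x * gd c B x) x v = (p' v - p x * wl B v x) * gd c B x := by
  rw [(pg_hasFDerivAt c B hp).fderiv]
  simp [wl_symm B v x]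
  ring

theorem nice_pg {m : ℕ} (c : ℝ) (B : Eu m →L[ℝ] Eu m) (K : ℝ) (hK : 0 < K)
    (hB : ∀ x, ‖x‖ ≤ K * ‖B x‖) {p : Eu m → ℝ} (hp : p.HasTemperateGrowth) :
    Nice (fun x => p x * gd c B x) := by
  refine ⟨(tg_diff hp).mul (gd_contDiff c B), ?_, ?_⟩
  · obtain ⟨k, D, h⟩ := tg_growth0 hp
    obtain ⟨C, hC⟩ := gd_decay c B K hK hB k D p h
    refine ⟨C, fun x => ?_⟩
    rw [mul_comm]
    exact hC x
  · obtain ⟨k, D, h⟩ := tg_growth0 hp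
    obtain ⟨k1, D1, h1⟩ := tg_growth1 hp
    have h2 : ∀ x, ‖wl B x‖ ≤ (‖B‖ * ‖B‖) * ‖x‖ := fun x => by
      refine ContinuousLinearMap.opNorm_le_bound _ (by positivity) fun v => ?_
      rw [wl_apply]
      calc ‖inner ℝ (B x) (B v)‖ ≤ ‖B x‖ * ‖B v‖ := norm_inner_le_norm _ _
        _ ≤ (‖B‖ * ‖x‖) * (‖B‖ * ‖v‖) := by
          gcongr <;> exact B.le_opNorm _
        _ = _ := by ring
    have h3 : ∀ x, ‖p x • wl B x‖ ≤ (D * (‖B‖ * ‖B‖)) * (1 + ‖x‖) ^ (k + 1) := fun x => by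
      have hD : 0 ≤ D * (1 + ‖x‖) ^ k := (norm_nonneg _).trans (h x)
      rw [norm_smul]
      calc ‖p x‖ * ‖wl B x‖ ≤ (D * (1 + ‖x‖) ^ k) * ((‖B‖ * ‖B‖) * (1 + ‖x‖)) := by
            refine mul_le_mul (h x) ((h2 x).trans ?_) (norm_nonneg _) hD
            gcongr
            linarith
        _ = _ := by ring
    obtain ⟨C1, hC1⟩ := gd_decay c B K hK hB k1 D1 _ h1
    obtain ⟨C2, hC2⟩ := gd_decay c B K hK hB _ _ _ h3
    refine ⟨C1 + C2, fun x => ?_⟩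
    have hd := ((tg_diff hp).differentiable (by norm_num) x).hasFDerivAt
    rw [(pg_hasFDerivAt c B hd).fderiv, smul_sub, add_mul]
    exact (norm_sub_le _ _).trans (add_le_add (hC1 x) (hC2 x))

theorem integral_fderiv_zero {m : ℕ} {ψ : Eu m → ℝ} (h : Nice ψ) (v : Eu m) :
    ∫ z, fderiv ℝ ψ z v = 0 := by
  have h1 := inner_hasFDerivAt h (g := fun _ => 1) measurable_const (by simp) (-1) 0
  have h2 : (fun y : Eu m => ∫ z, 1 * ψ (z - (-1 : ℝ) • y)) = fun _ => ∫ z, ψ z := by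
    ext y
    simp only [one_mul]
    exact integral_sub_right_eq_self ψ ((-1 : ℝ) • y)
  rw [h2] at h1
  have h3 := h1.unique (hasFDerivAt_const _ _)
  simp at h3
  rw [← ContinuousLinearMap.integral_apply h.integrable', h3]
  simp

section moments
variable {m : ℕ} (c : ℝ) (B : Eu m →L[ℝ] Eu m) (K : ℝ) (hK : 0 < K)
    (hB : ∀ x, ‖x‖ ≤ K * ‖B x‖)

theorem wl_tg (B : Eu m →L[ℝ] Eu m) (v : Eu m) : (fun x => wl B v x).HasTemperateGrowth :=
  (wl B v).hasTemperateGrowth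

theorem wl_pow_tg (B : Eu m →L[ℝ] Eu m) (v : Eu m) (n : ℕ) :
    (fun x => wl B v x ^ n).HasTemperateGrowth :=
  (wl_tg B v).pow n

theorem moment_step (n : ℕ) (v : Eu m) {K : ℝ} (hK : 0 < K) (hB : ∀ x, ‖x‖ ≤ K * ‖B x‖) :
    ∫ z, wl B v z ^ (n + 2) * gd c B z = (n + 1) * wl B v v * ∫ z, wl B v z ^ n * gd c B z := by
  have h0 := integral_fderiv_zero (nice_pg c B K hK hB (wl_pow_tg B v (n + 1))) v
  have h1 : ∀ z, fderiv ℝ (fun x => wl B v x ^ (n + 1) * gd c B x) z v =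
      (n + 1) * wl B v v * (wl B v z ^ n * gd c B z) - wl B v z ^ (n + 2) * gd c B z := by
    intro z
    rw [pg_fderiv c B (((wl B v).hasFDerivAt (x := z)).pow (n + 1)) v]
    simp
    ring
  simp_rw [h1] at h0
  rw [integral_sub, integral_const_mul] at h0
  · linarith
  · exact (nice_pg c B K hK hB (wl_pow_tg B v n)).integrable.const_mul _
  · exact (nice_pg c B K hK hB (wl_pow_tg B v (n + 2))).integrable

end moments

theorem pt_bound1 (r w : ℝ) (hr : 0 < r) : |w| ≤ (r + w ^ 2 / r) / 2 := by
  rw [le_div_iff₀ two_pos, ← sub_nonneg]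
  have : r + w ^ 2 / r - |w| * 2 = (r - |w|) ^ 2 / r := by
    field_simp
    rw [← sq_abs w]
    ring
  rw [this]
  positivity

theorem pt_bound3 (r w : ℝ) (hr : 0 < r) : |w| ^ 3 ≤ (r * w ^ 2 + w ^ 4 / r) / 2 := by
  have h := mul_le_mul_of_nonneg_left (pt_bound1 r w hr) (sq_nonneg w)
  calc |w| ^ 3 = w ^ 2 * |w| := by rw [← sq_abs w]; ring
    _ ≤ _ := h
    _ = _ := by field_simp

theorem amgm3 (a b c : ℝ) (ha : 0 ≤ a) (hb : 0 ≤ b) (hc : 0 ≤ c) :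
    a * b * c ≤ (a ^ 3 + b ^ 3 + c ^ 3) / 3 := by
  nlinarith [mul_nonneg (add_nonneg (add_nonneg ha hb) hc)
    (add_nonneg (add_nonneg (sq_nonneg (a - b)) (sq_nonneg (b - c))) (sq_nonneg (a - c)))]

/-- third Hermite-type polynomial -/
noncomputable def p3 {m : ℕ} (B : Eu m →L[ℝ] Eu m) (u v w x : Eu m) : ℝ :=
  wl B u v * wl B w x + wl B u w * wl B v x + wl B v w * wl B u x -
    wl B u x * wl B v x * wl B w x

/-- pointwise majorant of one direction -/
noncomputable def maj {m : ℕ} (B : Eu m →L[ℝ] Eu m) (r : ℝ) (u x : Eu m) : ℝ :=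
  (r * wl B u x ^ 2 + wl B u x ^ 4 / r) / 6 + r ^ 2 * ((r + wl B u x ^ 2 / r) / 2)

theorem p3_le {m : ℕ} (B : Eu m →L[ℝ] Eu m) (u v w x : Eu m) (r : ℝ) (hr : 0 < r)
    (huv : |wl B u v| ≤ r ^ 2) (huw : |wl B u w| ≤ r ^ 2) (hvw : |wl B v w| ≤ r ^ 2) :
    |p3 B u v w x| ≤ maj B r u x + maj B r v x + maj B r w x := by
  unfold p3 maj
  have h1 : ∀ a b : ℝ, |a| ≤ r ^ 2 → |a * b| ≤ r ^ 2 * ((r + b ^ 2 / r) / 2) := fun a b ha => by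
    rw [abs_mul]
    exact mul_le_mul ha (pt_bound1 r b hr) (abs_nonneg _) (by positivity)
  have h2 := h1 _ (wl B w x) huv
  have h3 := h1 _ (wl B v x) huw
  have h4 := h1 _ (wl B u x) hvw
  have h5 : |wl B u x * wl B v x * wl B w x| ≤
      (|wl B u x| ^ 3 + |wl B v x| ^ 3 + |wl B w x| ^ 3) / 3 := by
    rw [abs_mul, abs_mul]
    exact amgm3 _ _ _ (abs_nonneg _) (abs_nonneg _) (abs_nonneg _)
  have h6 := pt_bound3 r (wl B u x) hr
  have h7 := pt_bound3 r (wl B v x) hr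
  have h8 := pt_bound3 r (wl B w x) hr
  have h9 := abs_sub (wl B u v * wl B w x + wl B u w * wl B v x + wl B v w * wl B u x)
    (wl B u x * wl B v x * wl B w x)
  have h10 := abs_add_three (wl B u v * wl B w x) (wl B u w * wl B v x) (wl B v w * wl B u x)
  linarith

theorem integral_add3 {m : ℕ} {f g k : Eu m → ℝ} (hf : Integrable f) (hg : Integrable g)
    (hk : Integrable k) : ∫ x, (f x + g x + k x) = (∫ x, f x) + (∫ x, g x) + ∫ x, k x := by
  have h : Integrable (fun x => f x + g x) := hf.add hg
  rw [integral_add h hk, integral_add hf hg]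

theorem maj_integral {m : ℕ} (c : ℝ) (B : Eu m →L[ℝ] Eu m) (K : ℝ) (hK : 0 < K)
    (hB : ∀ x, ‖x‖ ≤ K * ‖B x‖) (h1 : ∫ z, gd c B z = 1) (u : Eu m) (r : ℝ) (hr : 0 < r)
    (hu : wl B u u ≤ r ^ 2) :
    Integrable (fun x => maj B r u x * gd c B x) ∧
    ∫ x, maj B r u x * gd c B x ≤ 5 / 3 * r ^ 3 := by
  have m0 : ∫ z, wl B u z ^ 0 * gd c B z = 1 := by simpa using h1
  have i0 := (nice_pg c B K hK hB (wl_pow_tg B u 0)).integrable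
  have i2 := (nice_pg c B K hK hB (wl_pow_tg B u 2)).integrable
  have i4 := (nice_pg c B K hK hB (wl_pow_tg B u 4)).integrable
  have m2 := moment_step c B 0 u hK hB
  have m4 := moment_step c B 2 u hK hB
  rw [m0] at m2
  norm_num at m2 m4
  rw [m2] at m4
  have hpos : 0 ≤ wl B u u := by rw [wl_apply]; exact real_inner_self_nonneg
  have e : (fun x => maj B r u x * gd c B x) = fun x =>
      (r ^ 3 / 2) * (wl B u x ^ 0 * gd c B x) + (2 * r / 3) * (wl B u x ^ 2 * gd c B x) +
      (1 / (6 * r)) * (wl B u x ^ 4 * gd c B x) := by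
    ext x
    unfold maj
    field_simp
    ring
  rw [e]
  refine ⟨((i0.const_mul _).add (i2.const_mul _)).add (i4.const_mul _), ?_⟩
  rw [integral_add3 (i0.const_mul _) (i2.const_mul _) (i4.const_mul _), integral_const_mul, integral_const_mul,
    integral_const_mul, m0, m2, m4]
  set q := wl B u u
  have h3 : 1 / (6 * r) * (3 * q * q) ≤ 1 / (6 * r) * (3 * r ^ 2 * r ^ 2) := by gcongr
  have h4 : 1 / (6 * r) * (3 * r ^ 2 * r ^ 2) = r ^ 3 / 2 := by field_simp; norm_num
  have h5 : 2 * r / 3 * q ≤ 2 * r / 3 * r ^ 2 := by gcongr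
  nlinarith

theorem p3_integral {m : ℕ} (c : ℝ) (hc : 0 ≤ c) (B : Eu m →L[ℝ] Eu m) (K : ℝ) (hK : 0 < K)
    (hB : ∀ x, ‖x‖ ≤ K * ‖B x‖) (h1 : ∫ z, gd c B z = 1) (u v w : Eu m) (r : ℝ) (hr : 0 < r)
    (huu : wl B u u ≤ r ^ 2) (hvv : wl B v v ≤ r ^ 2) (hww : wl B w w ≤ r ^ 2)
    (huv : |wl B u v| ≤ r ^ 2) (huw : |wl B u w| ≤ r ^ 2) (hvw : |wl B v w| ≤ r ^ 2) :
    ∫ x, ‖p3 B u v w x * gd c B x‖ ≤ 5 * r ^ 3 := by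
  obtain ⟨iu, bu⟩ := maj_integral c B K hK hB h1 u r hr huu
  obtain ⟨iv, bv⟩ := maj_integral c B K hK hB h1 v r hr hvv
  obtain ⟨iw, bw⟩ := maj_integral c B K hK hB h1 w r hr hww
  have hg : ∀ x, 0 ≤ gd c B x := fun x => by unfold gd; positivity
  calc ∫ x, ‖p3 B u v w x * gd c B x‖
      ≤ ∫ x, (maj B r u x * gd c B x + maj B r v x * gd c B x + maj B r w x * gd c B x) := by
        refine integral_mono_of_nonneg (Filter.Eventually.of_forall fun x => norm_nonneg _)
          ((iu.add iv).add iw) (Filter.Eventually.of_forall fun x => ?_)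
        have := mul_le_mul_of_nonneg_right (p3_le B u v w x r hr huv huw hvw) (hg x)
        simp only [norm_mul, Real.norm_eq_abs, abs_of_nonneg (hg x)]
        linarith
    _ = _ := integral_add3 iu iv iw
    _ ≤ _ := by linarith

/-- first polynomial -/
theorem d1 {m : ℕ} (c : ℝ) (B : Eu m →L[ℝ] Eu m) (u : Eu m) :
    (fun x => fderiv ℝ (fun x => (1 : ℝ) * gd c B x) x u) = fun x => (-wl B u x) * gd c B x := by
  ext x
  rw [pg_fderiv c B (p := fun _ => (1 : ℝ)) (hasFDerivAt_const (1 : ℝ) x) u]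
  simp

theorem d2 {m : ℕ} (c : ℝ) (B : Eu m →L[ℝ] Eu m) (u v : Eu m) :
    (fun x => fderiv ℝ (fun x => (-wl B u x) * gd c B x) x v) =
      fun x => (wl B u x * wl B v x - wl B u v) * gd c B x := by
  ext x
  rw [pg_fderiv c B (p := fun x => -wl B u x) ((wl B u).hasFDerivAt (x := x)).neg v]
  simp
  left
  ring

theorem d3 {m : ℕ} (c : ℝ) (B : Eu m →L[ℝ] Eu m) (u v w : Eu m) :
    (fun x => fderiv ℝ (fun x => (wl B u x * wl B v x - wl B u v) * gd c B x) x w) =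
      fun x => p3 B u v w x * gd c B x := by
  ext x
  rw [pg_fderiv c B (p := fun x => wl B u x * wl B v x - wl B u v)
    ((((wl B u).hasFDerivAt (x := x)).mul ((wl B v).hasFDerivAt (x := x))).sub_const _) w]
  simp [p3]
  left
  ring

theorem integral_gd {m : ℕ} (c : ℝ) (B : Eu m →L[ℝ] Eu m) (hd : LinearMap.det (B : Eu m →ₗ[ℝ] Eu m) ≠ 0) :
    ∫ z, gd c B z =
      c * (|(LinearMap.det (B : Eu m →ₗ[ℝ] Eu m))⁻¹| * (2 * π) ^ ((m : ℝ) / 2)) := by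
  have h1 := Measure.map_linearMap_addHaar_eq_smul_addHaar (volume : Measure (Eu m)) hd
  have h2 : ∫ z, Real.exp (-(1 / 2) * ‖z‖ ^ 2) ∂(Measure.map (B : Eu m →ₗ[ℝ] Eu m) volume) =
      ∫ x, Real.exp (-(1 / 2) * ‖B x‖ ^ 2) := by
    rw [integral_map]
    · rfl
    · exact B.continuous.aemeasurable
    · exact Continuous.aestronglyMeasurable (by fun_prop)
  rw [h1, integral_smul_measure, GaussianFourier.integral_rexp_neg_mul_sq_norm (by norm_num)] at h2
  unfold gd
  rw [integral_const_mul]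
  congr 1
  have h3 : (fun x => Real.exp (-‖B x‖ ^ 2 / 2)) = fun x => Real.exp (-(1 / 2) * ‖B x‖ ^ 2) := by
    ext x
    congr 1
    ring
  rw [h3, ← h2]
  rw [ENNReal.toReal_ofReal (abs_nonneg _), smul_eq_mul]
  simp
  left
  rw [mul_comm]

open scoped MatrixOrder Matrix.Norms.L2Operator in
theorem exists_factor {m : ℕ} (P : Matrix (Fin m) (Fin m) ℝ) (hP : P.PosDef) :
    ∃ B : Matrix (Fin m) (Fin m) ℝ, IsUnit B ∧ P = star B * B := by
  obtain ⟨y, hy, h⟩ := CStarAlgebra.isStrictlyPositive_iff_eq_star_mul_self.mp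
        hP.isStrictlyPositive
  exact ⟨y, hy, h⟩

theorem factor_inner {m : ℕ} (B : Matrix (Fin m) (Fin m) ℝ) (x y : Eu m) :
    inner ℝ x (Matrix.toEuclideanCLM (𝕜 := ℝ) (star B * B) y) =
      inner ℝ (Matrix.toEuclideanCLM (𝕜 := ℝ) B x) (Matrix.toEuclideanCLM (𝕜 := ℝ) B y) := by
  rw [map_mul, map_star, ContinuousLinearMap.star_eq_adjoint, ContinuousLinearMap.mul_apply,
    ContinuousLinearMap.adjoint_inner_right]

theorem density_eq {m : ℕ} (S : Matrix (Fin m) (Fin m) ℝ) (B : Matrix (Fin m) (Fin m) ℝ)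
    (hB : S⁻¹ = star B * B) :
    gaussianDensityMat m S = gd ((2 * π) ^ (-(m : ℝ) / 2) * S.det ^ (-(1 : ℝ) / 2))
      (Matrix.toEuclideanCLM (𝕜 := ℝ) B) := by
  ext z
  unfold gaussianDensityMat gd
  congr 3
  rw [← real_inner_self_eq_norm_sq, ← factor_inner, ← hB, Matrix.inner_toEuclideanCLM]
  simp only [dotProduct, Matrix.mulVec, Finset.mul_sum]
  congr 1
  refine Finset.sum_congr rfl fun k _ => Finset.sum_congr rfl fun l _ => ?_
  ring

theorem density_normalized {m : ℕ} (S : Matrix (Fin m) (Fin m) ℝ) (hS : S.PosDef)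
    (B : Matrix (Fin m) (Fin m) ℝ) (hu : IsUnit B) (hB : S⁻¹ = star B * B) :
    ∫ z, gd ((2 * π) ^ (-(m : ℝ) / 2) * S.det ^ (-(1 : ℝ) / 2))
      (Matrix.toEuclideanCLM (𝕜 := ℝ) B) z = 1 := by
  have hdet : LinearMap.det (Matrix.toEuclideanCLM (𝕜 := ℝ) B : Eu m →ₗ[ℝ] Eu m) = B.det := by
    rw [Matrix.coe_toEuclideanCLM_eq_toEuclideanLin]
    exact LinearMap.det_toLpLin _ _
  have hb0 : B.det ≠ 0 := ((Matrix.isUnit_iff_isUnit_det B).1 hu).ne_zero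
  rw [integral_gd _ _ (by rw [hdet]; exact hb0), hdet]
  have h1 : S.det⁻¹ = B.det ^ 2 := by
    have := congrArg Matrix.det hB
    rw [Matrix.det_mul, Matrix.star_eq_conjTranspose, Matrix.det_conjTranspose,
      Matrix.det_nonsing_inv, Ring.inverse_eq_inv'] at this
    rw [this]
    simp [sq]
  have hS0 : 0 < S.det := hS.det_pos
  have h2 : S.det ^ (-(1 : ℝ) / 2) = |B.det| := by
    rw [show (-(1 : ℝ) / 2) = -(1 / 2) by ring, Real.rpow_neg hS0.le, ← Real.sqrt_eq_rpow,
      ← Real.sqrt_inv, h1, Real.sqrt_sq_eq_abs]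
  have h3 : (2 * π) ^ (-(m : ℝ) / 2) = ((2 * π) ^ ((m : ℝ) / 2))⁻¹ := by
    rw [← Real.rpow_neg (by positivity)]
    congr 1
    ring
  rw [h2, h3, abs_inv]
  have h4 : (2 * π) ^ ((m : ℝ) / 2) ≠ 0 := by positivity
  have h5 : |B.det| ≠ 0 := abs_ne_zero.2 hb0
  field_simp

theorem factor_lower {m : ℕ} (B : Matrix (Fin m) (Fin m) ℝ) (hu : IsUnit B) :
    ∃ K : ℝ, 0 < K ∧ ∀ x : Eu m, ‖x‖ ≤ K * ‖Matrix.toEuclideanCLM (𝕜 := ℝ) B x‖ := by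
  refine ⟨‖Matrix.toEuclideanCLM (𝕜 := ℝ) B⁻¹‖ + 1, by positivity, fun x => ?_⟩
  have h1 : Matrix.toEuclideanCLM (𝕜 := ℝ) B⁻¹ (Matrix.toEuclideanCLM (𝕜 := ℝ) B x) = x := by
    rw [← ContinuousLinearMap.mul_apply, ← map_mul,
      Matrix.nonsing_inv_mul _ ((Matrix.isUnit_iff_isUnit_det B).1 hu), map_one]
    rfl
  have h2 := (Matrix.toEuclideanCLM (𝕜 := ℝ) B⁻¹).le_opNorm (Matrix.toEuclideanCLM (𝕜 := ℝ) B x)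
  rw [h1] at h2
  nlinarith [norm_nonneg (Matrix.toEuclideanCLM (𝕜 := ℝ) B x)]

theorem av_le {t s : ℝ} (ht : 0 < t) (hs : s ∈ Set.Ioc t 1) : av s ≤ 1 / Real.sqrt t := by
  unfold av
  have h0 : 0 < Real.sqrt t := Real.sqrt_pos.2 ht
  have h1 : Real.sqrt (1 - s) ≤ 1 := by
    exact (Real.sqrt_le_sqrt (by linarith [hs.1] : 1 - s ≤ 1)).trans_eq Real.sqrt_one
  exact div_le_div₀ zero_le_one h1 h0 (Real.sqrt_le_sqrt hs.1.le)

/-- weights -/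
noncomputable def wt (n : ℕ) (s : ℝ) : ℝ := (1 - s)⁻¹ * av s ^ n

theorem wt_succ (n : ℕ) : (fun s => wt n s * av s) = wt (n + 1) := by
  ext s
  unfold wt
  ring

theorem wt_meas (n : ℕ) : Measurable (wt n) := by
  have := av_meas
  unfold wt
  fun_prop

theorem wt_one_int {t : ℝ} (ht : 0 < t) (ht1 : t < 1) : IntegrableOn (wt 1) (Set.Ioc t 1) := by
  have h1 : IntegrableOn (fun s : ℝ => (1 - s) ^ (-(1 / 2) : ℝ)) (Set.Ioc t 1) := by
    have h := (intervalIntegral.intervalIntegrable_rpow' (a := 0) (b := 1 - t)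
      (r := (-(1 / 2) : ℝ)) (by norm_num)).comp_sub_left 1
    simp only [sub_zero, sub_sub_cancel] at h
    exact (intervalIntegrable_iff_integrableOn_Ioc_of_le ht1.le).1 h.symm
  refine (h1.mul_const (1 / Real.sqrt t)).mono' (wt_meas 1).aestronglyMeasurable ?_
  refine (ae_restrict_iff' measurableSet_Ioc).2 (Filter.Eventually.of_forall fun s hs => ?_)
  have hs1 : 0 ≤ 1 - s := by linarith [hs.2]
  have h0 : 0 < Real.sqrt t := Real.sqrt_pos.2 ht
  have hst : Real.sqrt t ≤ Real.sqrt s := Real.sqrt_le_sqrt hs.1.le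
  have e : wt 1 s = (1 - s) ^ (-(1 / 2) : ℝ) * (1 / Real.sqrt s) := by
    unfold wt av
    rw [Real.rpow_neg hs1, ← Real.sqrt_eq_rpow]
    rcases hs1.eq_or_lt with h | h
    · rw [← h]; simp
    · have h2 : 0 < Real.sqrt (1 - s) := Real.sqrt_pos.2 h
      have h3 : (1 - s) = Real.sqrt (1 - s) * Real.sqrt (1 - s) := (Real.mul_self_sqrt hs1).symm
      rw [pow_one]
      nth_rewrite 1 [h3]
      field_simp
  rw [e, Real.norm_of_nonneg (by positivity)]
  gcongr

theorem wt_int {t : ℝ} (ht : 0 < t) (ht1 : t < 1) (n : ℕ) :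
    IntegrableOn (wt (n + 1)) (Set.Ioc t 1) := by
  refine ((wt_one_int ht ht1).norm.mul_const ((1 / Real.sqrt t) ^ n)).mono'
    (wt_meas _).aestronglyMeasurable ?_
  refine (ae_restrict_iff' measurableSet_Ioc).2 (Filter.Eventually.of_forall fun s hs => ?_)
  have e : wt (n + 1) s = wt 1 s * av s ^ n := by unfold wt; ring
  rw [e, norm_mul, norm_pow, Real.norm_of_nonneg (av_nonneg s)]
  gcongr
  · exact av_nonneg s
  · exact av_le ht hs

theorem wt3_bound {t : ℝ} (ht : 0 < t) (ht1 : t < 1) :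
    ∫ s in Set.Ioc t 1, |wt 3 s| ≤ 2 / Real.sqrt t := by
  have hi : ∫ s in t..1, s ^ (-(3 / 2) : ℝ) = 2 / Real.sqrt t - 2 := by
    rw [integral_rpow]
    · rw [show (-(3 / 2) : ℝ) + 1 = -(1 / 2) by norm_num, Real.rpow_neg ht.le,
        ← Real.sqrt_eq_rpow, Real.one_rpow]
      field_simp
      ring
    · right
      refine ⟨by norm_num, ?_⟩
      rw [Set.uIcc_of_le ht1.le]
      intro h
      linarith [h.1]
  have hint : IntegrableOn (fun s : ℝ => s ^ (-(3 / 2) : ℝ)) (Set.Ioc t 1) := by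
    refine (intervalIntegrable_iff_integrableOn_Ioc_of_le ht1.le).1 ?_
    refine intervalIntegral.intervalIntegrable_rpow ?_
    right
    rw [Set.uIcc_of_le ht1.le]
    intro h
    linarith [h.1]
  calc ∫ s in Set.Ioc t 1, |wt 3 s| ≤ ∫ s in Set.Ioc t 1, s ^ (-(3 / 2) : ℝ) := by
        refine setIntegral_mono_on (wt_int ht ht1 2).norm hint measurableSet_Ioc fun s hs => ?_
        have hs0 : 0 < s := ht.trans hs.1
        have hs1 : 0 ≤ 1 - s := by linarith [hs.2]
        have hq : 0 < Real.sqrt s := Real.sqrt_pos.2 hs0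
        have e : s ^ (-(3 / 2) : ℝ) = 1 / Real.sqrt s ^ 3 := by
          rw [Real.rpow_neg hs0.le, Real.sqrt_eq_rpow, ← Real.rpow_natCast, ← Real.rpow_mul hs0.le]
          norm_num
        have hle : Real.sqrt (1 - s) ≤ 1 := by
          exact (Real.sqrt_le_sqrt (by linarith [hs.1] : 1 - s ≤ 1)).trans_eq Real.sqrt_one
        have e2 : wt 3 s ≤ 1 / Real.sqrt s ^ 3 := by
          unfold wt av
          rcases hs1.eq_or_lt with h | h
          · rw [← h]; simp
          · have h3 : Real.sqrt (1 - s) ^ 2 = 1 - s := Real.sq_sqrt hs1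
            have : (1 - s)⁻¹ * (Real.sqrt (1 - s) / Real.sqrt s) ^ 3 =
                Real.sqrt (1 - s) / Real.sqrt s ^ 3 := by
              rw [div_pow, pow_succ, h3]
              field_simp
            rw [this]
            gcongr
        have e3 : 0 ≤ wt 3 s := by
          have := av_nonneg s
          unfold wt
          positivity
        rw [abs_of_nonneg e3, e]
        exact e2
    _ = 2 / Real.sqrt t - 2 := by rw [← hi, intervalIntegral.integral_of_le ht1.le]
    _ ≤ _ := by linarith

theorem stein_eq {m : ℕ} (t : ℝ) (ht0 : 0 < t) (ht1 : t < 1) (h : Eu m → ℝ) (hmeas : Measurable h)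
    (hbd : ∀ y, |h y| ≤ 1) (S : Matrix (Fin m) (Fin m) ℝ)
    (hi : Integrable (gaussianDensityMat m S)) (y : Eu m) :
    steinSol m t h S y = (1 / 2) * T t (wt 0) (∫ z, h z * gaussianDensityMat m S z) h
      (gaussianDensityMat m S) y := by
  unfold steinSol T
  congr 1
  rw [intervalIntegral.integral_of_le ht1.le]
  refine setIntegral_congr_fun measurableSet_Ioc fun s hs => ?_
  have hs0 : 0 < s := ht0.trans hs.1
  have hq : 0 < Real.sqrt s := Real.sqrt_pos.2 hs0
  simp only [wt, pow_zero, mul_one]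
  congr 1
  simp only [sub_mul]
  rw [integral_sub]
  · congr 1
    unfold G
    rw [← integral_sub_right_eq_self (fun z => h (Real.sqrt s • z + Real.sqrt (1 - s) • y) *
      gaussianDensityMat m S z) (av s • y)]
    congr 1
    ext z
    congr 2
    rw [smul_sub, smul_smul, av, mul_div_cancel₀ _ hq.ne']
    simp
  · exact bdd_mul_integrable (g := fun z => h (Real.sqrt s • z + Real.sqrt (1 - s) • y))
      (by fun_prop) (fun z => hbd _) hi
  · exact bdd_mul_integrable hmeas hbd hi

theorem T_neg {m : ℕ} (t : ℝ) (p : ℝ → ℝ) (h ψ : Eu m → ℝ) (y : Eu m) :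
    fderiv ℝ (fun y => -T t p 0 h ψ y) y = -fderiv ℝ (T t p 0 h ψ) y := by
  exact fderiv_fun_neg

end SteinAux

open SteinAux in
/-- For measurable `h : ℝ^m → ℝ` with `‖h‖_∞ ≤ 1`, positive definite `Σ` and `t ∈ (0,1)`,
all third partial derivatives of `f_{t,h,Σ}` are bounded by
`6 m³ ‖Σ⁻¹‖_op^{3/2} / √t`. -/
theorem stmt18 (m : ℕ) (h : EuclideanSpace ℝ (Fin m) → ℝ) (hmeas : Measurable h)
    (hbd : ∀ y, |h y| ≤ 1) (S : Matrix (Fin m) (Fin m) ℝ) (hS : S.PosDef)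
    (t : ℝ) (ht0 : 0 < t) (ht1 : t < 1) (i j k : Fin m) (y : EuclideanSpace ℝ (Fin m)) :
    |fderiv ℝ (fun y1 => fderiv ℝ (fun y2 => fderiv ℝ (steinSol m t h S) y2
        (EuclideanSpace.single i 1)) y1 (EuclideanSpace.single j 1)) y
      (EuclideanSpace.single k 1)| ≤
      6 * m ^ 3 * ‖Matrix.toEuclideanCLM (𝕜 := ℝ) S⁻¹‖ ^ ((3 : ℝ) / 2) / Real.sqrt t := by
  obtain ⟨Bm, hu, hB⟩ := exists_factor S⁻¹ hS.inv
  obtain ⟨K, hK, hlow⟩ := factor_lower Bm hu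
  have hnorm := density_normalized S hS Bm hu hB
  have hdens := density_eq S Bm hB
  have hin := factor_inner Bm
  rw [← hB] at hin
  set L := Matrix.toEuclideanCLM (𝕜 := ℝ) S⁻¹ with hL
  set B := Matrix.toEuclideanCLM (𝕜 := ℝ) Bm with hBdef
  set c := (2 * π) ^ (-(m : ℝ) / 2) * S.det ^ (-(1 : ℝ) / 2) with hc
  have hc0 : 0 ≤ c := by
    have := hS.det_pos
    positivity
  -- bounds on the entries
  set ei : EuclideanSpace ℝ (Fin m) := EuclideanSpace.single i 1 with hei
  set ej : EuclideanSpace ℝ (Fin m) := EuclideanSpace.single j 1 with hej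
  set ek : EuclideanSpace ℝ (Fin m) := EuclideanSpace.single k 1 with hek
  have hni : ‖ei‖ = 1 := by simp [hei]
  have hnj : ‖ej‖ = 1 := by simp [hej]
  have hnk : ‖ek‖ = 1 := by simp [hek]
  have hent : ∀ u v : EuclideanSpace ℝ (Fin m), ‖u‖ = 1 → ‖v‖ = 1 → |wl B u v| ≤ ‖L‖ := by
    intro u v h1 h2
    rw [wl_apply, ← hin]
    calc |inner ℝ u (L v)| ≤ ‖u‖ * ‖L v‖ := abs_real_inner_le_norm _ _
      _ ≤ ‖u‖ * (‖L‖ * ‖v‖) := by gcongr; exact L.le_opNorm v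
      _ = ‖L‖ := by rw [h1, h2]; ring
  have hLpos : 0 < ‖L‖ := by
    refine lt_of_lt_of_le ?_ (hent ei ei hni hni)
    rw [wl_apply, real_inner_self_eq_norm_sq]
    have := hlow ei
    rw [hni] at this
    have h2 : 0 < ‖B ei‖ := by
      by_contra hcon
      have h3 : ‖B ei‖ = 0 := le_antisymm (not_lt.1 hcon) (norm_nonneg _)
      rw [h3] at this
      linarith
    positivity
  set r := Real.sqrt ‖L‖ with hr
  have hr0 : 0 < r := Real.sqrt_pos.2 hLpos
  have hr2 : r ^ 2 = ‖L‖ := Real.sq_sqrt hLpos.le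
  have hr3 : ‖L‖ ^ ((3 : ℝ) / 2) = r ^ 3 := by
    rw [hr, Real.sqrt_eq_rpow, ← Real.rpow_natCast, ← Real.rpow_mul hLpos.le]
    norm_num
  have hent' : ∀ u v : EuclideanSpace ℝ (Fin m), ‖u‖ = 1 → ‖v‖ = 1 → |wl B u v| ≤ r ^ 2 := by
    rw [hr2]; exact hent
  have hL1 := p3_integral c hc0 B K hK hlow hnorm ei ej ek r hr0
    ((le_abs_self _).trans (hent' _ _ hni hni)) ((le_abs_self _).trans (hent' _ _ hnj hnj))
    ((le_abs_self _).trans (hent' _ _ hnk hnk)) (hent' _ _ hni hnj) (hent' _ _ hni hnk)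
    (hent' _ _ hnj hnk)
  -- regularity of the successive derivatives
  have hg1 : gaussianDensityMat m S = fun x => (1 : ℝ) * gd c B x := by
    rw [hdens]; ext x; simp
  have n0 : Nice (fun x => (1 : ℝ) * gd c B x) :=
    nice_pg c B K hK hlow (Function.HasTemperateGrowth.const (1 : ℝ))
  have n1 : Nice (fun x => (-wl B ei x) * gd c B x) :=
    nice_pg c B K hK hlow (wl_tg B ei).neg
  have n2 : Nice (fun x => (wl B ei x * wl B ej x - wl B ei ej) * gd c B x) :=
    nice_pg c B K hK hlow (((wl_tg B ei).mul (wl_tg B ej)).sub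
      (Function.HasTemperateGrowth.const _))
  have tg3 : (p3 B ei ej ek).HasTemperateGrowth := by
    have c1 : ∀ a : ℝ, (fun _ : EuclideanSpace ℝ (Fin m) => a).HasTemperateGrowth :=
      fun a => Function.HasTemperateGrowth.const a
    exact ((((c1 _).mul (wl_tg B ek)).add ((c1 _).mul (wl_tg B ej))).add
      ((c1 _).mul (wl_tg B ei))).sub (((wl_tg B ei).mul (wl_tg B ej)).mul (wl_tg B ek))
  have n3 : Nice (fun x => p3 B ei ej ek x * gd c B x) := nice_pg c B K hK hlow tg3
  have hst := stein_eq t ht0 ht1 h hmeas hbd S (by rw [hg1]; exact n0.integrable)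
  set c₀ := ∫ z, h z * gaussianDensityMat m S z with hc₀
  rw [hg1] at hst
  have hRHS : 0 ≤ 6 * (m : ℝ) ^ 3 * ‖L‖ ^ ((3 : ℝ) / 2) / Real.sqrt t := by positivity
  by_cases hint : IntegrableOn (fun s => wt 0 s *
      (G h (fun x => (1 : ℝ) * gd c B x) s 0 - c₀)) (Set.Ioc t 1)
  · -- the main case
    have hall := fun y => T_integrable_transfer hmeas hbd n0 (wt_meas 0)
      (by rw [wt_succ]; exact wt_int ht0 ht1 0) 0 y hint
    have f1 : (fun y2 => fderiv ℝ (steinSol m t h S) y2 ei) =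
        fun y2 => -((1 / 2) * T t (wt 1) 0 h (fun x => (-wl B ei x) * gd c B x) y2) := by
      ext y2
      have e0 : steinSol m t h S = fun y => (1 / 2) * T t (wt 0) c₀ h
          (fun x => (1 : ℝ) * gd c B x) y := funext hst
      have hpa : IntegrableOn (fun s => wt 0 s * av s) (Set.Ioc t 1) := by
        rw [wt_succ]; exact wt_int ht0 ht1 0
      have hd := T_hasFDerivAt hmeas hbd n0 (wt_meas 0) hpa y2 (hall y2)
      have hv := T_fderiv hmeas hbd n0 (wt_meas 0) hpa y2 ei (hall y2)
      rw [e0, fderiv_const_mul hd.differentiableAt, FunLike.coe_smul, Pi.smul_apply, hv, wt_succ, d1]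
      simp
    have f2 : (fun y1 => fderiv ℝ (fun y2 => fderiv ℝ (steinSol m t h S) y2 ei) y1 ej) =
        fun y1 => (1 / 2) * T t (wt 2) 0 h
          (fun x => (wl B ei x * wl B ej x - wl B ei ej) * gd c B x) y1 := by
      ext y1
      rw [f1]
      have hpa : IntegrableOn (fun s => wt 1 s * av s) (Set.Ioc t 1) := by
        rw [wt_succ]; exact wt_int ht0 ht1 1
      have hi := T_integrable hmeas hbd n1.cd.continuous n1.integrable (wt_int ht0 ht1 0) y1
      have hd := T_hasFDerivAt hmeas hbd n1 (wt_meas 1) hpa y1 hi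
      have hv := T_fderiv hmeas hbd n1 (wt_meas 1) hpa y1 ej hi
      rw [fderiv_fun_neg, fderiv_const_mul hd.differentiableAt, ContinuousLinearMap.neg_apply,
        FunLike.coe_smul, Pi.smul_apply, hv, wt_succ, d2]
      simp
    rw [f2]
    have hpa : IntegrableOn (fun s => wt 2 s * av s) (Set.Ioc t 1) := by
      rw [wt_succ]; exact wt_int ht0 ht1 2
    have hi := T_integrable hmeas hbd n2.cd.continuous n2.integrable (wt_int ht0 ht1 1) y
    have hd := T_hasFDerivAt hmeas hbd n2 (wt_meas 2) hpa y hi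
    have hv := T_fderiv hmeas hbd n2 (wt_meas 2) hpa y ek hi
    rw [fderiv_const_mul hd.differentiableAt, FunLike.coe_smul, Pi.smul_apply, hv, wt_succ, d3,
      smul_eq_mul, abs_mul, abs_neg, hr3]
    have hT := T_bound (t := t) hbd n3.integrable (wt_int ht0 ht1 2) y
    have hw := wt3_bound ht0 ht1
    have hm1 : (1 : ℝ) ≤ (m : ℝ) ^ 3 := by
      have : 1 ≤ m := Nat.one_le_iff_ne_zero.2 (fun h0 => by subst h0; exact i.elim0)
      exact one_le_pow₀ (by exact_mod_cast this)
    have hst0 : 0 < Real.sqrt t := Real.sqrt_pos.2 ht0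
    calc |(1 / 2 : ℝ)| * |T t (wt (2 + 1)) 0 h (fun x => p3 B ei ej ek x * gd c B x) y|
        ≤ (1 / 2) * ((2 / Real.sqrt t) * (5 * r ^ 3)) := by
          rw [abs_of_pos (by norm_num : (0 : ℝ) < 1 / 2)]
          refine mul_le_mul_of_nonneg_left (hT.trans ?_) (by norm_num)
          exact mul_le_mul hw hL1 (integral_nonneg fun x => norm_nonneg _) (by positivity)
      _ = 5 * 1 * r ^ 3 / Real.sqrt t := by ring
      _ ≤ 6 * (m : ℝ) ^ 3 * r ^ 3 / Real.sqrt t := by gcongr; norm_num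
  · -- degenerate case: never integrable
    have hz : steinSol m t h S = fun _ => 0 := by
      ext y
      rw [hst y]
      have : T t (wt 0) c₀ h (fun x => (1 : ℝ) * gd c B x) y = 0 := by
        refine integral_undef fun hy => hint ?_
        exact T_integrable_transfer hmeas hbd n0 (wt_meas 0)
          (by rw [wt_succ]; exact wt_int ht0 ht1 0) y 0 hy
      rw [this, mul_zero]
    rw [hz]
    simpa using hRHS
end
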